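/- Suppose 𝔼[z(0)] < ∞. Then ℙ-almost surely, P^ω₀(X_t = 0) = ((4π)^{−(d+1)/2} 𝔼[z(0)]^{−1/2} + o(1)) t^{−(1+d)/2} as t → ∞. -/

import Mathlib

open MeasureTheory ProbabilityTheory Filter Set

noncomputable section

/-- `n`-step transition probabilities of the discrete-time simple random walk on `ℤ^m`. -/
def srwKernel (m : ℕ) : ℕ → (Fin m → ℤ) → (Fin m → ℤ) → ℝ
  | 0, x, y => if x = y then 1 else 0
  | n + 1, x, y =>
      (∑ i : Fin m, (srwKernel m n (Function.update x i (x i + 1)) y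
        + srwKernel m n (Function.update x i (x i - 1)) y)) / (2 * m)

/-- Transition kernel of the continuous-time simple random walk on `ℤ^m` which jumps to
each of its `2m` nearest neighbours at rate `1` (total jump rate `2m`). -/
def heatKernel (m : ℕ) (t : ℝ) (x y : Fin m → ℤ) : ℝ :=
  ∑' n : ℕ, Real.exp (-(2 * m) * t) * ((2 * m) * t) ^ n / n.factorial * srwKernel m n x y

/-- `(P, S)` is (a realization of) the continuous-time simple random walk on `ℤ^m`:
under `P x` the process `S` starts at `x`, has right-continuous (piecewise constant)
paths, and its finite-dimensional distributions are given by the heat kernel. -/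
structure IsCTSRW (m : ℕ) {Ω : Type*} [MeasurableSpace Ω]
    (P : (Fin m → ℤ) → Measure Ω) (S : ℝ → Ω → (Fin m → ℤ)) : Prop where
  prob : ∀ x, IsProbabilityMeasure (P x)
  meas : Measurable fun p : ℝ × Ω => S p.1 p.2
  start : ∀ x, ∀ᵐ ω ∂ P x, S 0 ω = x
  rightCont : ∀ x, ∀ᵐ ω ∂ P x, ∀ t : ℝ, 0 ≤ t →
    ∃ ε > (0 : ℝ), ∀ u, t ≤ u → u < t + ε → S u ω = S t ω
  fdd : ∀ x (n : ℕ) (t : Fin (n + 1) → ℝ), 0 ≤ t 0 →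
    (∀ i : Fin n, t i.castSucc ≤ t i.succ) →
    ∀ y : Fin (n + 1) → (Fin m → ℤ),
      (P x {ω | ∀ i, S (t i) ω = y i}).toReal
        = heatKernel m (t 0) x (y 0)
          * ∏ i : Fin n, heatKernel m (t i.succ - t i.castSucc) (y i.castSucc) (y i.succ)

/-- `z` is an i.i.d. nonnegative random scenery on `ℤ^d` whose common upper tail decays
like `r^{-α+o(1)}`. -/
structure IsScenery (d : ℕ) (α : ℝ) {Ω : Type*} [MeasurableSpace Ω]
    (μ : Measure Ω) (z : (Fin d → ℤ) → Ω → ℝ) : Prop where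
  prob : IsProbabilityMeasure μ
  meas : ∀ x, Measurable (z x)
  nonneg : ∀ x ω, 0 ≤ z x ω
  indep : iIndepFun z μ
  ident : ∀ x, IdentDistrib (z x) (z 0) μ μ
  tail : Tendsto (fun r : ℝ => Real.log (μ {ω | r < z 0 ω}).toReal / Real.log r)
    atTop (nhds (-α))

/-- The random walk in random scenery `A(t) = ∫₀ᵗ z(S_u) du`. -/
def rwrs {Ωz Ωw : Type*} (d : ℕ) (z : (Fin d → ℤ) → Ωz → ℝ)
    (S : ℝ → Ωw → (Fin d → ℤ)) (t : ℝ) (ζ : Ωz) (ω : Ωw) : ℝ :=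
  ∫ u in Set.Ioc (0 : ℝ) t, z (S u ω) ζ

end
open MeasureTheory ProbabilityTheory Filter Set

noncomputable section

/-- The clock process `A²(t) = ∫₀ᵗ z(S²_u) du`, where `S²` is the second (ℤ^d-valued)
component of the walk on `ℤ^{1+d}`. -/
def clock (d : ℕ) {Ωz Ωw : Type*} (z : (Fin d → ℤ) → Ωz → ℝ)
    (S : ℝ → Ωw → (Fin (d + 1) → ℤ)) (t : ℝ) (ζ : Ωz) (ω : Ωw) : ℝ :=
  ∫ u in Set.Ioc (0 : ℝ) t, z (fun i => S u ω i.succ) ζ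

/-- The variable-speed random walk `X_t = (S¹_{A²(t)}, S²_t)` in the layered conductance
field `ω(x, x±e₁) = z(x₂)`, `ω(x, x±e_i) = 1` for `i ≥ 2` (coordinate `0` of the walk on
`ℤ^{1+d}` is the ℤ-coordinate, coordinates `1,…,d` form the ℤ^d-coordinate). -/
def layeredWalk (d : ℕ) {Ωz Ωw : Type*} (z : (Fin d → ℤ) → Ωz → ℝ)
    (S : ℝ → Ωw → (Fin (d + 1) → ℤ)) (t : ℝ) (ζ : Ωz) (ω : Ωw) : ℤ × (Fin d → ℤ) :=
  (S (clock d z S t ζ ω) ω 0, fun i => S t ω i.succ)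

/-- Euclidean norm of a point of `ℤ^{1+d} = ℤ × ℤ^d`. -/
def euclNormProd (d : ℕ) (x : ℤ × (Fin d → ℤ)) : ℝ :=
  Real.sqrt ((x.1 : ℝ) ^ 2 + ∑ i, (x.2 i : ℝ) ^ 2)

end

/-!
The components `S¹` and `S²` of the walk are independent, so conditioning on `S²` turns the return
probability into `E[k(A t); S² t = 0]`, where `A` is the clock and `k(s) ~ (4πs)^{-1/2}` is the
return probability of the one-dimensional walk. As `P(S² t = 0) = k(t)^d`, it remains to compare
`A t` with `m t`, where `m = 𝔼[z(0)]`: the event `A t < a t`, `a < m`, must have probability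
`o(t^{-(d+1)/2})`, while for the event `A t > a t`, `a > m`, it suffices that its intersection with
`S² t = 0` has probability `o(t^{-d/2})`.

Truncate the scenery at a large level `K`. A bounded centred scenery is subgaussian, so the annealed
exponential moments of its clock are bounded by exponential moments of the self-intersection local
time of `S²`, which are under control because the Green function grows at most like `√t`. Hence the
truncated clock deviates from its mean with a probability smaller than any power of `t`; it bounds
the clock from below, which settles the lower tail. The excess over `K` has no exponential moments;
but by the maximal ergodic inequality its expected contribution to the clock along `S²` is almost
surely at most a small multiple of `t`, and Markov's inequality, after splitting the bridge from `0`
to `0` at its midpoint, settles the upper tail.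
-/

open scoped ENNReal NNReal Topology Real

/-! ### Fourier representation of the heat kernel -/

/-- The uniform probability measure on the dual circle `(-π, π]` of `ℤ`, against which the
transition kernels are Fourier integrals. -/
noncomputable def angleMeasure : Measure ℝ :=
  ENNReal.ofReal (1 / (2 * π)) • volume.restrict (Ioc (-π) π)

instance : IsProbabilityMeasure angleMeasure where
  measure_univ := by
    rw [angleMeasure, Measure.smul_apply, Measure.restrict_apply_univ, Real.volume_Ioc,
      smul_eq_mul, ← ENNReal.ofReal_mul (by positivity),
      show 1 / (2 * π) * (π - -π) = 1 by field_simp; ring, ENNReal.ofReal_one]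

lemma integral_angleMeasure (f : ℝ → ℝ) :
    ∫ θ, f θ ∂angleMeasure = 1 / (2 * π) * ∫ θ in (-π)..π, f θ := by
  rw [angleMeasure, integral_smul_measure, ENNReal.toReal_ofReal (by positivity), smul_eq_mul,
    intervalIntegral.integral_of_le (by linarith [Real.pi_pos])]

lemma integrable_angleMeasure_of_continuous {f : ℝ → ℝ} (hf : Continuous f) :
    Integrable f angleMeasure :=
  (hf.integrableOn_Icc.mono_set Ioc_subset_Icc_self).smul_measure ENNReal.ofReal_ne_top

lemma integral_cos_int_mul_angleMeasure (a : ℤ) :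
    ∫ θ, Real.cos (a * θ) ∂angleMeasure = if a = 0 then 1 else 0 := by
  split_ifs with h
  · simp [h]
  · have ha : (a : ℝ) ≠ 0 := Int.cast_ne_zero.mpr h
    rw [integral_angleMeasure, intervalIntegral.integral_comp_mul_left Real.cos ha]
    simp [Real.sin_int_mul_pi]

section Torus

variable {ι : Type*} [Fintype ι]

/-- The product `∏ i, cos (k i * θ i)`, the even part in each variable of the character
`θ ↦ exp (i ⟨k, θ⟩)` of the torus. -/
noncomputable def cosProd (k : ι → ℤ) (θ : ι → ℝ) : ℝ := ∏ i, Real.cos (k i * θ i)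

/-- The characteristic function of one step of the simple random walk on `ℤ^ι`. -/
noncomputable def meanCos (θ : ι → ℝ) : ℝ := (∑ i, Real.cos (θ i)) / Fintype.card ι

lemma continuous_cosProd (k : ι → ℤ) : Continuous (cosProd k) := by
  unfold cosProd; fun_prop

lemma continuous_meanCos : Continuous (meanCos (ι := ι)) := by
  unfold meanCos; fun_prop

lemma abs_cosProd_le_one (k : ι → ℤ) (θ : ι → ℝ) : |cosProd k θ| ≤ 1 := by
  rw [cosProd, Finset.abs_prod]
  exact Finset.prod_le_one (fun _ _ => abs_nonneg _) (fun _ _ => Real.abs_cos_le_one _)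

lemma abs_meanCos_le_one (θ : ι → ℝ) : |meanCos θ| ≤ 1 := by
  rw [meanCos, abs_div, Nat.abs_cast]
  refine div_le_one_of_le₀ ?_ (Nat.cast_nonneg _)
  calc |∑ i, Real.cos (θ i)| ≤ ∑ i, |Real.cos (θ i)| := Finset.abs_sum_le_sum_abs _ _
    _ ≤ ∑ _ : ι, 1 := Finset.sum_le_sum fun i _ => Real.abs_cos_le_one _
    _ = Fintype.card ι := by simp

lemma abs_cosProd_mul_meanCos_pow_le_one (k : ι → ℤ) (n : ℕ) (θ : ι → ℝ) :
    |cosProd k θ * meanCos θ ^ n| ≤ 1 := by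
  rw [abs_mul, abs_pow]
  exact mul_le_one₀ (abs_cosProd_le_one k θ) (by positivity)
    (pow_le_one₀ (abs_nonneg _) (abs_meanCos_le_one θ))

lemma integrable_cosProd_mul_meanCos_pow (k : ι → ℤ) (n : ℕ) :
    Integrable (fun θ => cosProd k θ * meanCos θ ^ n) (Measure.pi fun _ => angleMeasure) :=
  .of_bound ((continuous_cosProd k).mul (continuous_meanCos.pow n)).aestronglyMeasurable 1
    (Eventually.of_forall (abs_cosProd_mul_meanCos_pow_le_one k n))

lemma integral_cosProd (k : ι → ℤ) :
    ∫ θ, cosProd k θ ∂Measure.pi (fun _ => angleMeasure) = if k = 0 then 1 else 0 := by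
  simp only [cosProd]
  rw [integral_fintype_prod_eq_prod (f := fun i (t : ℝ) => Real.cos (k i * t))]
  simp only [integral_cos_int_mul_angleMeasure]
  split_ifs with h
  · simp [h]
  · obtain ⟨i, hi⟩ := Function.ne_iff.mp h
    exact Finset.prod_eq_zero (Finset.mem_univ i) (if_neg hi)

lemma cosProd_add_single [DecidableEq ι] (k : ι → ℤ) (i : ι) (b : ℤ) (θ : ι → ℝ) :
    cosProd (k + Pi.single i b) θ =
      Real.cos (k i * θ i + b * θ i) * ∏ j ∈ Finset.univ.erase i, Real.cos (k j * θ j) := by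
  rw [cosProd, ← Finset.mul_prod_erase _ _ (Finset.mem_univ i)]
  congr 1
  · simp [add_mul]
  · refine Finset.prod_congr rfl fun j hj => ?_
    simp [Finset.ne_of_mem_erase hj]

lemma cosProd_add_single_one_add_cosProd_add_single_neg_one [DecidableEq ι] (k : ι → ℤ) (i : ι)
    (θ : ι → ℝ) :
    cosProd (k + Pi.single i 1) θ + cosProd (k + Pi.single i (-1)) θ =
      2 * Real.cos (θ i) * cosProd k θ := by
  rw [cosProd_add_single, cosProd_add_single, cosProd,
    ← Finset.mul_prod_erase Finset.univ _ (Finset.mem_univ i), ← add_mul, Real.cos_add,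
    Real.cos_add]
  simp only [Int.cast_one, Int.cast_neg, one_mul, neg_mul, Real.cos_neg, Real.sin_neg]
  ring

end Torus

lemma srwKernel_eq_integral {m : ℕ} (hm : m ≠ 0) (n : ℕ) (x y : Fin m → ℤ) :
    srwKernel m n x y =
      ∫ θ, cosProd (x - y) θ * meanCos θ ^ n ∂Measure.pi (fun _ => angleMeasure) := by
  induction n generalizing x with
  | zero => simp only [srwKernel, pow_zero, mul_one, integral_cosProd, sub_eq_zero]
  | succ n ih =>
    have hm' : (m : ℝ) ≠ 0 := Nat.cast_ne_zero.mpr hm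
    have hupd (i : Fin m) (b : ℤ) :
        Function.update x i (x i + b) - y = x - y + Pi.single i b := by
      rw [Pi.update_eq_sub_add_single, Pi.single_add]
      abel
    have hint (i : Fin m) (b : ℤ) :=
      integrable_cosProd_mul_meanCos_pow (x - y + Pi.single i b) n
    simp only [srwKernel, ih, sub_eq_add_neg (x _) 1, hupd]
    simp_rw [← integral_add (hint _ _) (hint _ _), ← add_mul,
      cosProd_add_single_one_add_cosProd_add_single_neg_one]
    rw [← integral_finsetSum _ fun i _ => ?_, ← integral_div]
    · refine integral_congr_ae (Eventually.of_forall fun θ => ?_)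
      dsimp only
      rw [← Finset.sum_mul, ← Finset.sum_mul, ← Finset.mul_sum, pow_succ]
      simp only [meanCos, Fintype.card_fin]
      field_simp
    · refine ((hint i 1).add (hint i (-1))).congr (Eventually.of_forall fun θ => ?_)
      simp only [Pi.add_apply, ← add_mul, cosProd_add_single_one_add_cosProd_add_single_neg_one]

/-- The heat kernel of the walk on `ℤ` with displacement `a`, as a Fourier integral. -/
noncomputable def lineKernel (t : ℝ) (a : ℤ) : ℝ :=
  ∫ θ, Real.cos (a * θ) * Real.exp (-(2 * t * (1 - Real.cos θ))) ∂angleMeasure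

lemma heatKernel_zero_dim (t : ℝ) (x y : Fin 0 → ℤ) : heatKernel 0 t x y = 1 := by
  rw [heatKernel, tsum_eq_single 0 (by simp +contextual)]
  simp [srwKernel, Subsingleton.elim x y]

lemma hasSum_poisson_mul_pow (r s : ℝ) :
    HasSum (fun n : ℕ => Real.exp (-r) * r ^ n / n.factorial * s ^ n)
      (Real.exp (-(r * (1 - s)))) := by
  have h := (NormedSpace.expSeries_div_hasSum_exp (𝔸 := ℝ) (r * s)).mul_left (Real.exp (-r))
  rw [← Real.exp_eq_exp_ℝ, ← Real.exp_add, show -r + r * s = -(r * (1 - s)) by ring] at h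
  refine h.congr_fun fun n => ?_
  rw [mul_pow]; ring

lemma cosProd_mul_exp_meanCos {m : ℕ} (hm : m ≠ 0) (t : ℝ) (k : Fin m → ℤ) (θ : Fin m → ℝ) :
    cosProd k θ * Real.exp (-(2 * m * t * (1 - meanCos θ))) =
      ∏ i, Real.cos (k i * θ i) * Real.exp (-(2 * t * (1 - Real.cos (θ i)))) := by
  have hm' : (m : ℝ) ≠ 0 := Nat.cast_ne_zero.mpr hm
  rw [Finset.prod_mul_distrib, ← Real.exp_sum, cosProd, Finset.sum_neg_distrib,
    ← Finset.mul_sum, Finset.sum_sub_distrib, meanCos]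
  simp only [Fintype.card_fin, Finset.sum_const, Finset.card_univ, nsmul_eq_mul, mul_one]
  congr 3
  field_simp

lemma heatKernel_eq_integral {m : ℕ} (hm : m ≠ 0) (t : ℝ) (x y : Fin m → ℤ) :
    heatKernel m t x y = ∫ θ, cosProd (x - y) θ * Real.exp (-(2 * m * t * (1 - meanCos θ)))
      ∂Measure.pi (fun _ => angleMeasure) := by
  set p : ℕ → ℝ := fun n => Real.exp (-(2 * m * t)) * (2 * m * t) ^ n / n.factorial with hp
  set c : ℕ → (Fin m → ℝ) → ℝ := fun n θ => cosProd (x - y) θ * meanCos θ ^ n with hc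
  have hint (n : ℕ) : Integrable (fun θ => p n * c n θ) (Measure.pi fun _ => angleMeasure) :=
    (integrable_cosProd_mul_meanCos_pow (x - y) n).const_mul _
  have hnorm (n : ℕ) (θ : Fin m → ℝ) : ‖p n * c n θ‖ ≤ ‖p n‖ := by
    rw [norm_mul]
    exact mul_le_of_le_one_right (norm_nonneg _)
      (abs_cosProd_mul_meanCos_pow_le_one (x - y) n θ)
  have hp_summable : Summable fun n => ‖p n‖ := by
    simp only [hp, mul_div_assoc]
    exact ((Real.summable_pow_div_factorial _).mul_left _).norm
  have hswap := hasSum_integral_of_summable_integral_norm hint <|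
    hp_summable.of_nonneg_of_le (fun n => integral_nonneg fun _ => norm_nonneg _) fun n => by
      simpa using integral_mono (hint n).norm (integrable_const ‖p n‖) (hnorm n)
  have hsum (θ : Fin m → ℝ) : HasSum (fun n => p n * c n θ)
      (cosProd (x - y) θ * Real.exp (-(2 * m * t * (1 - meanCos θ)))) :=
    ((hasSum_poisson_mul_pow _ _).mul_left _).congr_fun fun n => by
      simp only [hp, hc]; ring
  simp_rw [← (hsum _).tsum_eq, ← hswap.tsum_eq, integral_const_mul, hc,
    ← srwKernel_eq_integral hm, heatKernel, hp, neg_mul]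

lemma heatKernel_eq_prod {m : ℕ} (t : ℝ) (x y : Fin m → ℤ) :
    heatKernel m t x y = ∏ i, lineKernel t (x i - y i) := by
  rcases eq_or_ne m 0 with rfl | hm
  · simp [heatKernel_zero_dim]
  · simp only [heatKernel_eq_integral hm, cosProd_mul_exp_meanCos hm, lineKernel]
    exact integral_fintype_prod_eq_prod fun i (θ : ℝ) =>
      Real.cos ((x i - y i : ℤ) * θ) * Real.exp (-(2 * t * (1 - Real.cos θ)))

/-! ### The one-dimensional kernel -/

lemma lineKernel_neg (t : ℝ) (a : ℤ) : lineKernel t (-a) = lineKernel t a := by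
  simp [lineKernel]

lemma lineKernel_zero_time (a : ℤ) : lineKernel 0 a = if a = 0 then 1 else 0 := by
  simp [lineKernel, ← integral_cos_int_mul_angleMeasure]

lemma srwKernel_nonneg (m n : ℕ) (x y : Fin m → ℤ) : 0 ≤ srwKernel m n x y := by
  induction n generalizing x with
  | zero => rw [srwKernel]; positivity
  | succ n ih =>
    exact div_nonneg (Finset.sum_nonneg fun i _ => add_nonneg (ih _) (ih _)) (by positivity)

lemma heatKernel_nonneg (m : ℕ) {t : ℝ} (ht : 0 ≤ t) (x y : Fin m → ℤ) :
    0 ≤ heatKernel m t x y :=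
  tsum_nonneg fun n => mul_nonneg (by positivity) (srwKernel_nonneg m n x y)

lemma lineKernel_nonneg {t : ℝ} (ht : 0 ≤ t) (a : ℤ) : 0 ≤ lineKernel t a := by
  simpa [heatKernel_eq_prod] using heatKernel_nonneg 1 ht (fun _ => a) 0

lemma lineKernel_le_zero_displacement (t : ℝ) (a : ℤ) : lineKernel t a ≤ lineKernel t 0 := by
  refine integral_mono (integrable_angleMeasure_of_continuous (by fun_prop))
    (integrable_angleMeasure_of_continuous (by fun_prop)) fun θ => ?_
  refine mul_le_mul_of_nonneg_right ?_ (Real.exp_pos _).le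
  simpa using Real.cos_le_one _

lemma antitone_lineKernel_zero_displacement : Antitone fun t => lineKernel t 0 := by
  intro s t hst
  refine integral_mono (integrable_angleMeasure_of_continuous (by fun_prop))
    (integrable_angleMeasure_of_continuous (by fun_prop)) fun θ => ?_
  refine mul_le_mul_of_nonneg_left (Real.exp_le_exp.mpr ?_) (by simp)
  nlinarith [Real.cos_le_one θ]

lemma lineKernel_le_one {t : ℝ} (ht : 0 ≤ t) (a : ℤ) : lineKernel t a ≤ 1 :=
  calc lineKernel t a ≤ lineKernel t 0 := lineKernel_le_zero_displacement t a
    _ ≤ lineKernel 0 0 := antitone_lineKernel_zero_displacement ht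
    _ = 1 := by simp [lineKernel_zero_time]

lemma continuous_lineKernel (a : ℤ) : Continuous fun t => lineKernel t a := by
  simp only [lineKernel, integral_angleMeasure]
  exact (intervalIntegral.continuous_parametric_intervalIntegral_of_continuous'
    (by fun_prop) _ _).const_mul _

/-! ### The local limit theorem on the diagonal -/

lemma tendsto_mul_one_sub_cos_div_sqrt (φ : ℝ) :
    Tendsto (fun t : ℝ => 2 * t * (1 - Real.cos (φ / √t))) atTop (𝓝 (φ ^ 2)) := by
  have hhalf : Tendsto (fun t : ℝ => φ / √t / 2) atTop (𝓝 0) := by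
    simpa using ((tendsto_const_nhds (x := φ)).div_atTop Real.tendsto_sqrt_atTop).div_const 2
  have hsinc : Tendsto (fun t : ℝ => φ ^ 2 * Real.sinc (φ / √t / 2) ^ 2) atTop (𝓝 (φ ^ 2)) := by
    simpa using (((Real.continuous_sinc.tendsto 0).comp hhalf).pow 2).const_mul (φ ^ 2)
  refine hsinc.congr' ?_
  filter_upwards [eventually_gt_atTop 0] with t ht
  rcases eq_or_ne φ 0 with rfl | hφ
  · simp
  have hx : φ / √t / 2 ≠ 0 := by positivity
  have hcos : 1 - Real.cos (φ / √t) = 2 * Real.sin (φ / √t / 2) ^ 2 := by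
    rw [Real.sin_sq_eq_half_sub, mul_div_cancel₀ _ two_ne_zero]
    ring
  rw [Real.sinc_of_ne_zero hx, hcos]
  field_simp
  rw [Real.sq_sqrt ht.le]
  ring

/-- The integrand of `√t * lineKernel t 0` after the substitution `θ = φ / √t`, without the
factor `1 / (2 * π)`. -/
noncomputable def rescaledSymbol (t φ : ℝ) : ℝ :=
  (Ioc (-π * √t) (π * √t)).indicator
    (fun φ => Real.exp (-(2 * t * (1 - Real.cos (φ / √t))))) φ

lemma sqrt_mul_lineKernel_zero_displacement {t : ℝ} (ht : 0 < t) :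
    √t * lineKernel t 0 = 1 / (2 * π) * ∫ φ, rescaledSymbol t φ := by
  have hs : 0 < √t := Real.sqrt_pos.mpr ht
  simp only [rescaledSymbol]
  rw [integral_indicator measurableSet_Ioc, ← intervalIntegral.integral_of_le
    (by nlinarith [Real.pi_pos]), intervalIntegral.integral_comp_div
      (fun x => Real.exp (-(2 * t * (1 - Real.cos x)))) hs.ne', mul_div_cancel_right₀ _ hs.ne',
    mul_div_cancel_right₀ _ hs.ne', lineKernel, integral_angleMeasure, smul_eq_mul]
  simp only [Int.cast_zero, zero_mul, Real.cos_zero, one_mul]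
  ring

lemma norm_rescaledSymbol_le {t : ℝ} (ht : 0 < t) (φ : ℝ) :
    ‖rescaledSymbol t φ‖ ≤ Real.exp (-(4 / π ^ 2) * φ ^ 2) := by
  have hs : 0 < √t := Real.sqrt_pos.mpr ht
  by_cases hφ : φ ∈ Ioc (-π * √t) (π * √t)
  · rw [rescaledSymbol, indicator_of_mem hφ, Real.norm_eq_abs, Real.abs_exp]
    refine Real.exp_le_exp.mpr ?_
    have hφs : |φ / √t| ≤ π := by
      rw [abs_div, abs_of_pos hs, div_le_iff₀ hs, abs_le]
      exact ⟨by linarith [hφ.1], hφ.2⟩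
    have hscale : 2 * t * (2 / π ^ 2 * (φ / √t) ^ 2) = 4 / π ^ 2 * φ ^ 2 := by
      rw [div_pow, Real.sq_sqrt ht.le]; field_simp; ring
    have hmul := mul_le_mul_of_nonneg_left (Real.cos_le_one_sub_mul_cos_sq hφs)
      (show 0 ≤ 2 * t by positivity)
    linarith
  · rw [rescaledSymbol, indicator_of_notMem hφ, norm_zero]
    positivity

lemma tendsto_rescaledSymbol (φ : ℝ) :
    Tendsto (fun t => rescaledSymbol t φ) atTop (𝓝 (Real.exp (-1 * φ ^ 2))) := by
  have hexp : Tendsto (fun t : ℝ => Real.exp (-(2 * t * (1 - Real.cos (φ / √t))))) atTop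
      (𝓝 (Real.exp (-1 * φ ^ 2))) := by
    simpa using (tendsto_mul_one_sub_cos_div_sqrt φ).neg.rexp
  refine hexp.congr' ?_
  filter_upwards [Real.tendsto_sqrt_atTop.eventually_gt_atTop (|φ| / π)] with t ht
  rw [div_lt_iff₀ Real.pi_pos] at ht
  have hφ : φ ∈ Ioc (-π * √t) (π * √t) :=
    ⟨by linarith [(abs_lt.mp ht).1], by linarith [(abs_lt.mp ht).2]⟩
  rw [rescaledSymbol, indicator_of_mem hφ]

lemma tendsto_sqrt_mul_lineKernel :
    Tendsto (fun t : ℝ => √t * lineKernel t 0) atTop (𝓝 ((4 * π) ^ (-(1 / 2) : ℝ))) := by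
  have hgauss : Tendsto (fun t : ℝ => ∫ φ, rescaledSymbol t φ) atTop
      (𝓝 (∫ φ, Real.exp (-1 * φ ^ 2))) := by
    refine tendsto_integral_filter_of_dominated_convergence
      (fun φ => Real.exp (-(4 / π ^ 2) * φ ^ 2)) ?_ ?_
      (integrable_exp_neg_mul_sq (by positivity)) (Eventually.of_forall tendsto_rescaledSymbol)
    · exact Eventually.of_forall fun t =>
        (Continuous.aestronglyMeasurable (by fun_prop)).indicator measurableSet_Ioc
    · filter_upwards [eventually_gt_atTop 0] with t ht
      exact Eventually.of_forall (norm_rescaledSymbol_le ht)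
  have hconst : 1 / (2 * π) * √(π / 1) = (4 * π) ^ (-(1 / 2) : ℝ) := by
    have hsqrt : √π ≠ 0 := (Real.sqrt_pos.mpr Real.pi_pos).ne'
    rw [Real.rpow_neg (by positivity), ← Real.sqrt_eq_rpow, div_one,
      show (4 : ℝ) * π = 2 ^ 2 * π by ring, Real.sqrt_mul (by positivity),
      Real.sqrt_sq (by norm_num)]
    field_simp
    exact Real.sq_sqrt Real.pi_pos.le
  rw [← hconst, ← integral_gaussian]
  refine (hgauss.const_mul (1 / (2 * π))).congr' ?_
  filter_upwards [eventually_gt_atTop 0] with t ht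
  exact (sqrt_mul_lineKernel_zero_displacement ht).symm

lemma exists_lineKernel_le_div_sqrt :
    ∃ C : ℝ, 0 < C ∧ ∀ j : ℕ, lineKernel (j + 1) 0 ≤ C / √(j + 1) := by
  have h := tendsto_sqrt_mul_lineKernel.comp
    (tendsto_natCast_atTop_atTop.comp (tendsto_add_atTop_nat 1))
  obtain ⟨C, hC⟩ := h.bddAbove_range
  refine ⟨max C 1, by positivity, fun j => ?_⟩
  have hj : √(j + 1) * lineKernel (j + 1) 0 ≤ C := by
    simpa using hC (mem_range_self j)
  rw [le_div_iff₀ (by positivity), mul_comm]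
  exact hj.trans (le_max_left _ _)

/-! ### The heat kernel as a Markov kernel -/

lemma hasSum_srwKernel {m : ℕ} (hm : m ≠ 0) (n : ℕ) (x : Fin m → ℤ) :
    HasSum (fun y => srwKernel m n x y) 1 := by
  induction n generalizing x with
  | zero => simpa only [srwKernel, eq_comm] using hasSum_ite_eq x (1 : ℝ)
  | succ n ih =>
    have h := (hasSum_sum (s := Finset.univ) fun i _ =>
      (ih (Function.update x i (x i + 1))).add (ih (Function.update x i (x i - 1)))).div_const
        (2 * (m : ℝ))
    have hmass : (∑ _i : Fin m, ((1 : ℝ) + 1)) / (2 * m) = 1 := by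
      rw [Finset.sum_const, Finset.card_univ, Fintype.card_fin, nsmul_eq_mul]
      field_simp
      norm_num
    rwa [hmass] at h

/-- The heat kernel with values in `ℝ≥0∞`, in which transition probabilities are summed. -/
noncomputable def heatKernelENN (m : ℕ) (t : ℝ) (x y : Fin m → ℤ) : ℝ≥0∞ :=
  ENNReal.ofReal (heatKernel m t x y)

lemma heatKernelENN_eq_tsum {m : ℕ} (hm : m ≠ 0) {t : ℝ} (ht : 0 ≤ t) (x y : Fin m → ℤ) :
    heatKernelENN m t x y =
      ∑' n : ℕ, ENNReal.ofReal (Real.exp (-(2 * m * t)) * (2 * m * t) ^ n / n.factorial) *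
        ENNReal.ofReal (srwKernel m n x y) := by
  have hterm (n : ℕ) : 0 ≤ Real.exp (-(2 * m * t)) * (2 * m * t) ^ n / n.factorial := by
    positivity
  have hle (n : ℕ) : srwKernel m n x y ≤ 1 :=
    le_hasSum (hasSum_srwKernel hm n x) y fun _ _ => srwKernel_nonneg ..
  have hweights : Summable fun n : ℕ =>
      Real.exp (-(2 * m * t)) * (2 * m * t) ^ n / n.factorial := by
    simpa using (hasSum_poisson_mul_pow (2 * m * t) 1).summable
  simp_rw [heatKernelENN, heatKernel, neg_mul, ← ENNReal.ofReal_mul (hterm _)]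
  exact ENNReal.ofReal_tsum_of_nonneg (fun n => mul_nonneg (hterm n) (srwKernel_nonneg ..))
    (hweights.of_nonneg_of_le (fun n => mul_nonneg (hterm n) (srwKernel_nonneg ..))
      fun n => mul_le_of_le_one_right (hterm n) (hle n))

lemma tsum_heatKernelENN {m : ℕ} {t : ℝ} (ht : 0 ≤ t) (x : Fin m → ℤ) :
    ∑' y, heatKernelENN m t x y = 1 := by
  rcases eq_or_ne m 0 with rfl | hm
  · simp [heatKernelENN, heatKernel_zero_dim]
  have hsrw (n : ℕ) : ∑' y, ENNReal.ofReal (srwKernel m n x y) = 1 := by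
    rw [← ENNReal.ofReal_tsum_of_nonneg (fun y => srwKernel_nonneg ..)
      (hasSum_srwKernel hm n x).summable, (hasSum_srwKernel hm n x).tsum_eq, ENNReal.ofReal_one]
  have hpoisson : HasSum (fun n : ℕ => Real.exp (-(2 * m * t)) * (2 * m * t) ^ n / n.factorial)
      1 := by
    simpa using hasSum_poisson_mul_pow (2 * m * t) 1
  simp_rw [heatKernelENN_eq_tsum hm ht]
  rw [ENNReal.tsum_comm]
  simp_rw [ENNReal.tsum_mul_left, hsrw, mul_one]
  rw [← ENNReal.ofReal_tsum_of_nonneg (fun n => by positivity) hpoisson.summable,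
    hpoisson.tsum_eq, ENNReal.ofReal_one]

section HeatKernelENN

variable {m : ℕ} {t : ℝ}

lemma heatKernelENN_eq_prod (ht : 0 ≤ t) (x y : Fin m → ℤ) :
    heatKernelENN m t x y = ∏ i, ENNReal.ofReal (lineKernel t (x i - y i)) := by
  rw [heatKernelENN, heatKernel_eq_prod,
    ENNReal.ofReal_prod_of_nonneg fun i _ => lineKernel_nonneg ht _]

lemma heatKernelENN_comm (x y : Fin m → ℤ) : heatKernelENN m t x y = heatKernelENN m t y x := by
  simp_rw [heatKernelENN, heatKernel_eq_prod, ← lineKernel_neg t (x _ - y _), neg_sub]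

lemma heatKernelENN_add_right (x y c : Fin m → ℤ) :
    heatKernelENN m t (x + c) (y + c) = heatKernelENN m t x y := by
  simp [heatKernelENN, heatKernel_eq_prod]

lemma heatKernelENN_self (x : Fin m → ℤ) :
    heatKernelENN m t x x = ENNReal.ofReal (lineKernel t 0 ^ m) := by
  simp [heatKernelENN, heatKernel_eq_prod]

lemma heatKernelENN_le_self (ht : 0 ≤ t) (x y : Fin m → ℤ) :
    heatKernelENN m t x y ≤ ENNReal.ofReal (lineKernel t 0 ^ m) := by
  refine ENNReal.ofReal_le_ofReal ?_
  calc heatKernel m t x y = ∏ i, lineKernel t (x i - y i) := heatKernel_eq_prod ..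
    _ ≤ ∏ _i : Fin m, lineKernel t 0 :=
        Finset.prod_le_prod (fun i _ => lineKernel_nonneg ht _)
          fun i _ => lineKernel_le_zero_displacement t _
    _ = lineKernel t 0 ^ m := by simp

lemma heatKernelENN_succ (ht : 0 ≤ t) (x y : Fin (m + 1) → ℤ) :
    heatKernelENN (m + 1) t x y = ENNReal.ofReal (lineKernel t (x 0 - y 0)) *
      heatKernelENN m t (fun i => x i.succ) (fun i => y i.succ) := by
  simp_rw [heatKernelENN_eq_prod ht, Fin.prod_univ_succ]

lemma tsum_ofReal_lineKernel (ht : 0 ≤ t) (a : ℤ) :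
    ∑' b : ℤ, ENNReal.ofReal (lineKernel t (a - b)) = 1 := by
  rw [← tsum_heatKernelENN ht fun _ : Fin 1 => a, ← (Equiv.funUnique (Fin 1) ℤ).tsum_eq]
  refine tsum_congr fun y => ?_
  simp [heatKernelENN_eq_prod ht]

end HeatKernelENN

/-! ### Laws of chains -/

section ChainWeight

variable {X : Type*}

/-- Probability that a chain started at `x₀` with transition probabilities `q i` at step `i`
follows the path `y`. -/
noncomputable def chainWeight {n : ℕ} (q : Fin n → X → X → ℝ≥0∞) (x₀ : X) (y : Fin n → X) :
    ℝ≥0∞ :=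
  ∏ i : Fin n, q i ((Fin.cons x₀ y : Fin (n + 1) → X) i.castSucc) (y i)

lemma chainWeight_cons {n : ℕ} (q : Fin (n + 1) → X → X → ℝ≥0∞) (x₀ a : X) (y : Fin n → X) :
    chainWeight q x₀ (Fin.cons a y : Fin (n + 1) → X) =
      q 0 x₀ a * chainWeight (fun i => q i.succ) a y :=
  Fin.prod_univ_succ _

lemma tsum_fin_succ_pi {n : ℕ} (F : (Fin (n + 1) → X) → ℝ≥0∞) :
    ∑' y, F y = ∑' a : X, ∑' y : Fin n → X, F (Fin.cons a y) := by
  rw [← (Fin.consEquiv fun _ : Fin (n + 1) => X).tsum_eq F, ENNReal.tsum_prod']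
  rfl

lemma tsum_chainWeight {n : ℕ} (q : Fin n → X → X → ℝ≥0∞) (hq : ∀ i x, ∑' y, q i x y = 1)
    (x₀ : X) : ∑' y, chainWeight q x₀ y = 1 := by
  induction n generalizing x₀ with
  | zero => simp [chainWeight]
  | succ n ih =>
    simp_rw [tsum_fin_succ_pi, chainWeight_cons, ENNReal.tsum_mul_left,
      ih (fun i => q i.succ) (fun i => hq i.succ), mul_one, hq]

end ChainWeight

section CountableLaw

variable {Ω X Z : Type*} [MeasurableSpace Ω] [Countable Z] [MeasurableSpace Z]
  [MeasurableSingletonClass Z] {P : Measure Ω} {B : Ω → Z}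

lemma lintegral_comp_eq_tsum (hB : Measurable B) (h : Z → ℝ≥0∞) :
    ∫⁻ ω, h (B ω) ∂P = ∑' b, h b * P (B ⁻¹' {b}) := by
  rw [← lintegral_map (measurable_of_countable h) hB, lintegral_countable']
  simp_rw [Measure.map_apply hB (measurableSet_singleton _)]

lemma measure_eq_tsum_preimage_inter (hB : Measurable B) (E : Set Ω) :
    P E = ∑' b, P (B ⁻¹' {b} ∩ E) := by
  have h := lintegral_comp_eq_tsum (P := P.restrict E) hB 1
  simpa [Measure.restrict_apply (hB (measurableSet_singleton _))] using h

lemma law_and_indepFun_of_measure_inter_eq_mul [Countable X] [MeasurableSpace X]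
    [MeasurableSingletonClass X] [IsProbabilityMeasure P] {A : Ω → X} (hA : Measurable A)
    (hB : Measurable B) {f : X → ℝ≥0∞} {g : Z → ℝ≥0∞} (hf : ∑' a, f a = 1) (hg : ∑' b, g b = 1)
    (h : ∀ a b, P (A ⁻¹' {a} ∩ B ⁻¹' {b}) = f a * g b) :
    (∀ a, P (A ⁻¹' {a}) = f a) ∧ (∀ b, P (B ⁻¹' {b}) = g b) ∧ IndepFun A B P := by
  have hlawA (a : X) : P (A ⁻¹' {a}) = f a := by
    rw [measure_eq_tsum_preimage_inter hB]
    simp_rw [inter_comm, h, ENNReal.tsum_mul_left, hg, mul_one]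
  have hlawB (b : Z) : P (B ⁻¹' {b}) = g b := by
    rw [measure_eq_tsum_preimage_inter hA]
    simp_rw [h, ENNReal.tsum_mul_right, hf, one_mul]
  refine ⟨hlawA, hlawB, ?_⟩
  rw [indepFun_iff_map_prod_eq_prod_map_map hA.aemeasurable hB.aemeasurable]
  refine Measure.ext_of_singleton fun p => ?_
  rw [Measure.map_apply (hA.prodMk hB) (measurableSet_singleton p), ← singleton_prod_singleton,
    Measure.prod_prod, Measure.map_apply hA (measurableSet_singleton _),
    Measure.map_apply hB (measurableSet_singleton _), hlawA, hlawB, ← h]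
  rfl

end CountableLaw

/-! ### The two components of the walk -/

/-- The `ℤ^d`-component `S²` of a walk `S` on `ℤ × ℤ^d`; it selects the layer. -/
def layerPath {d : ℕ} {Ω : Type*} (S : ℝ → Ω → (Fin (d + 1) → ℤ)) (u : ℝ) (ω : Ω) : Fin d → ℤ :=
  Fin.tail (S u ω)

lemma tail_zero {d : ℕ} : Fin.tail (0 : Fin (d + 1) → ℤ) = 0 := rfl

/-- Increments of a sequence of times, the first one counted from time `0`. -/
def timeGap {n : ℕ} (t : Fin n → ℝ) (i : Fin n) : ℝ :=
  t i - (Fin.cons 0 t : Fin (n + 1) → ℝ) i.castSucc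

lemma timeGap_zero {n : ℕ} (t : Fin (n + 1) → ℝ) : timeGap t 0 = t 0 := by
  simp [timeGap]

lemma timeGap_succ {n : ℕ} (t : Fin (n + 1) → ℝ) (i : Fin n) :
    timeGap t i.succ = t i.succ - t i.castSucc := by
  simp [timeGap]

lemma timeGap_nonneg {n : ℕ} {t : Fin (n + 1) → ℝ} (h0 : 0 ≤ t 0) (hmono : Monotone t)
    (i : Fin (n + 1)) : 0 ≤ timeGap t i := by
  refine Fin.cases ?_ (fun j => ?_) i
  · rwa [timeGap_zero]
  · rw [timeGap_succ]
    exact sub_nonneg.mpr (hmono Fin.castSucc_lt_succ.le)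

section Walk

variable {d : ℕ} {Ω : Type*} [MeasurableSpace Ω] {P : (Fin (d + 1) → ℤ) → Measure Ω}
  {S : ℝ → Ω → (Fin (d + 1) → ℤ)}

lemma IsCTSRW.measurable_apply (hS : IsCTSRW (d + 1) P S) (u : ℝ) : Measurable (S u) :=
  hS.meas.comp measurable_prodMk_left

lemma IsCTSRW.measurable_layerPath_uncurry (hS : IsCTSRW (d + 1) P S) :
    Measurable fun p : ℝ × Ω => layerPath S p.1 p.2 :=
  measurable_pi_lambda _ fun i => (measurable_pi_apply i.succ).comp hS.meas

lemma IsCTSRW.measurable_layerPath (hS : IsCTSRW (d + 1) P S) (u : ℝ) :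
    Measurable (layerPath S u) :=
  hS.measurable_layerPath_uncurry.comp measurable_prodMk_left

lemma IsCTSRW.measurable_coord_zero (hS : IsCTSRW (d + 1) P S) (u : ℝ) :
    Measurable fun ω => S u ω 0 :=
  (measurable_pi_apply 0).comp (hS.measurable_apply u)

lemma IsCTSRW.measure_path_eq_chainWeight (hS : IsCTSRW (d + 1) P S) {n : ℕ}
    {t : Fin (n + 1) → ℝ} (h0 : 0 ≤ t 0) (hmono : Monotone t) (x : Fin (d + 1) → ℤ)
    (y : Fin (n + 1) → (Fin (d + 1) → ℤ)) :
    P x {ω | ∀ i, S (t i) ω = y i} =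
      chainWeight (fun i => heatKernelENN (d + 1) (timeGap t i)) x y := by
  have := hS.prob x
  have hgap (i : Fin n) : 0 ≤ t i.succ - t i.castSucc :=
    sub_nonneg.mpr (hmono Fin.castSucc_lt_succ.le)
  rw [← ENNReal.ofReal_toReal (measure_ne_top (P x) {ω | ∀ i, S (t i) ω = y i}),
    hS.fdd x n t h0 (fun i => hmono Fin.castSucc_lt_succ.le) y,
    ENNReal.ofReal_mul (heatKernel_nonneg _ h0 _ _),
    ENNReal.ofReal_prod_of_nonneg fun i _ => heatKernel_nonneg _ (hgap i) _ _,
    chainWeight, Fin.prod_univ_succ]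
  simp only [timeGap_zero, timeGap_succ, ← Fin.succ_castSucc, Fin.cons_succ, Fin.castSucc_zero,
    Fin.cons_zero, heatKernelENN]

/-- The product form of the heat kernel makes the two components independent walks. -/
lemma IsCTSRW.law_and_indepFun_components (hS : IsCTSRW (d + 1) P S) {n : ℕ}
    {t : Fin (n + 1) → ℝ} (h0 : 0 ≤ t 0) (hmono : Monotone t) (x : Fin (d + 1) → ℤ) :
    (∀ a, P x ((fun ω i => S (t i) ω 0) ⁻¹' {a}) = chainWeight
      (fun i a b => ENNReal.ofReal (lineKernel (timeGap t i) (a - b))) (x 0) a) ∧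
    (∀ y, P x ((fun ω i => layerPath S (t i) ω) ⁻¹' {y}) =
      chainWeight (fun i => heatKernelENN d (timeGap t i)) (Fin.tail x) y) ∧
    IndepFun (fun ω i => S (t i) ω 0) (fun ω i => layerPath S (t i) ω) (P x) := by
  have := hS.prob x
  have hgap := timeGap_nonneg h0 hmono
  refine law_and_indepFun_of_measure_inter_eq_mul
    (measurable_pi_lambda _ fun i => hS.measurable_coord_zero _)
    (measurable_pi_lambda _ fun i => hS.measurable_layerPath _)
    (tsum_chainWeight _ (fun i => tsum_ofReal_lineKernel (hgap i)) _)
    (tsum_chainWeight _ (fun i => tsum_heatKernelENN (hgap i)) _) fun a b => ?_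
  have hevent : (fun ω i => S (t i) ω 0) ⁻¹' {a} ∩ (fun ω i => layerPath S (t i) ω) ⁻¹' {b} =
      {ω | ∀ i, S (t i) ω = Fin.cons (a i) (b i)} := by
    ext ω
    simp [funext_iff, layerPath, Fin.tail, Fin.forall_fin_succ (n := d), forall_and]
  rw [hevent, hS.measure_path_eq_chainWeight h0 hmono]
  simp_rw [chainWeight, ← Finset.prod_mul_distrib, heatKernelENN_succ (hgap _)]
  refine Finset.prod_congr rfl fun i _ => Fin.cases ?_ (fun j => ?_) i
  · simp [Fin.tail_def]
  · simp

lemma IsCTSRW.measure_coord_zero_eq (hS : IsCTSRW (d + 1) P S) {u : ℝ} (hu : 0 ≤ u) :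
    P 0 {ω | S u ω 0 = 0} = ENNReal.ofReal (lineKernel u 0) := by
  have h := (hS.law_and_indepFun_components (t := fun _ : Fin 1 => u) hu monotone_const 0).1 0
  simpa [chainWeight, timeGap, preimage, funext_iff] using h

lemma IsCTSRW.measure_layerPath_eq (hS : IsCTSRW (d + 1) P S) {u : ℝ} (hu : 0 ≤ u)
    (y : Fin d → ℤ) : P 0 {ω | layerPath S u ω = y} = heatKernelENN d u 0 y := by
  have h := (hS.law_and_indepFun_components (t := fun _ : Fin 1 => u) hu monotone_const 0).2.1
    fun _ => y
  simpa [chainWeight, timeGap, preimage, funext_iff (α := Fin 1), tail_zero] using h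

lemma IsCTSRW.measure_layerPath_pair_eq (hS : IsCTSRW (d + 1) P S) {s t : ℝ} (hs : 0 ≤ s)
    (ht : 0 ≤ t) (x y : Fin d → ℤ) :
    P 0 {ω | layerPath S s ω = x ∧ layerPath S (s + t) ω = y} =
      heatKernelENN d s 0 x * heatKernelENN d t x y := by
  have hmono : Monotone ![s, s + t] := by
    rw [Fin.monotone_iff_le_succ]
    simpa using ht
  have h := (hS.law_and_indepFun_components (t := ![s, s + t]) hs hmono 0).2.1 ![x, y]
  have hevent : {ω | layerPath S s ω = x ∧ layerPath S (s + t) ω = y} =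
      (fun ω i => layerPath S (![s, s + t] i) ω) ⁻¹' {![x, y]} := by
    ext ω
    simp [funext_iff (α := Fin 2), Fin.forall_fin_two]
  rw [hevent, h]
  simp [chainWeight, timeGap, Fin.prod_univ_succ, tail_zero]

/-- Chapman–Kolmogorov, read off from the one- and two-time marginals of the walk. -/
lemma IsCTSRW.tsum_heatKernelENN_mul (hS : IsCTSRW (d + 1) P S) {s t : ℝ} (hs : 0 ≤ s)
    (ht : 0 ≤ t) (x y : Fin d → ℤ) :
    ∑' a, heatKernelENN d s x a * heatKernelENN d t a y = heatKernelENN d (s + t) x y := by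
  have hzero : ∑' a, heatKernelENN d s 0 a * heatKernelENN d t a (y - x) =
      heatKernelENN d (s + t) 0 (y - x) := by
    rw [← hS.measure_layerPath_eq (add_nonneg hs ht),
      measure_eq_tsum_preimage_inter (hS.measurable_layerPath s)]
    exact tsum_congr fun a => (hS.measure_layerPath_pair_eq hs ht a (y - x)).symm
  rw [← heatKernelENN_add_right _ _ x, zero_add, sub_add_cancel] at hzero
  rw [← hzero, ← (Equiv.addRight x).tsum_eq]
  refine tsum_congr fun a => ?_
  rw [Equiv.coe_addRight, ← heatKernelENN_add_right 0 a x, zero_add,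
    ← heatKernelENN_add_right a (y - x) x, sub_add_cancel]

lemma IsCTSRW.indepFun_coord_zero_layerPath (hS : IsCTSRW (d + 1) P S) (u : ℝ≥0) :
    IndepFun (fun ω => S u ω 0) (fun ω (v : ℝ≥0) => layerPath S v ω) (P 0) := by
  have := hS.prob 0
  refine IndepFun.indepFun_process (hS.measurable_coord_zero u)
    (fun v => hS.measurable_layerPath v) fun I => ?_
  obtain ⟨n, hn⟩ : ∃ n, (insert u I).card = n + 1 :=
    Nat.exists_eq_add_one.mpr (Finset.card_pos.mpr (Finset.insert_nonempty u I))
  set t : Fin (n + 1) → ℝ≥0 := fun i => (insert u I).orderEmbOfFin hn i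
  have hsurj : ∀ v ∈ insert u I, ∃ i, t i = v := fun v hv => by
    rwa [← mem_range, Finset.range_orderEmbOfFin, Finset.mem_coe]
  have hmono : Monotone fun i => (t i : ℝ) := fun i j hij =>
    NNReal.coe_le_coe.mpr (((insert u I).orderEmbOfFin hn).monotone hij)
  obtain ⟨i₀, hi₀⟩ := hsurj u (Finset.mem_insert_self u I)
  choose! φ hφ using hsurj
  have hind := (hS.law_and_indepFun_components (t 0).2 hmono 0).2.2.comp
    (measurable_pi_apply i₀) (measurable_pi_lambda (fun y (v : I) => y (φ v))
      fun v => measurable_pi_apply (φ v))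
  convert hind using 1
  · ext ω
    simp [hi₀]
  · ext ω v : 2
    simp [hφ v (Finset.mem_insert_of_mem v.2)]

end Walk

/-! ### Freezing an independent time -/

/-- The first point strictly above `u`, for `u ≥ 0`, of the grid of mesh `1/(n+1)`; approximating
times by grid points reduces functionals of a right-continuous path to countably many times. -/
noncomputable def gridAbove (n : ℕ) (u : ℝ) : ℝ≥0 := (⌊((n : ℝ) + 1) * u⌋₊ + 1) / (n + 1)

lemma measurable_gridAbove (n : ℕ) : Measurable (gridAbove n) :=
  (measurable_of_countable fun j : ℕ => ((j : ℝ≥0) + 1) / (n + 1)).comp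
    (Nat.measurable_floor.comp (measurable_const_mul _))

lemma lt_gridAbove (n : ℕ) (u : ℝ) : u < gridAbove n u := by
  simp only [gridAbove, NNReal.coe_div, NNReal.coe_add, NNReal.coe_natCast, NNReal.coe_one]
  rw [lt_div_iff₀ (by positivity), mul_comm]
  exact Nat.lt_floor_add_one _

lemma gridAbove_le (n : ℕ) {u : ℝ} (hu : 0 ≤ u) : (gridAbove n u : ℝ) ≤ u + 1 / (n + 1) := by
  simp only [gridAbove, NNReal.coe_div, NNReal.coe_add, NNReal.coe_natCast, NNReal.coe_one,
    add_div]
  gcongr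
  rw [div_le_iff₀ (by positivity), mul_comm u]
  exact Nat.floor_le (by positivity)

lemma tendsto_gridAbove {u : ℝ} (hu : 0 ≤ u) :
    Tendsto (fun n => (gridAbove n u : ℝ)) atTop (𝓝 u) := by
  refine tendsto_of_tendsto_of_tendsto_of_le_of_le tendsto_const_nhds ?_
    (fun n => (lt_gridAbove n u).le) (fun n => gridAbove_le n hu)
  simpa using tendsto_const_nhds.add (tendsto_one_div_add_atTop_nhds_zero_nat (𝕜 := ℝ))

lemma eventually_gridAbove_eq {X : Type*} {f : ℝ → X} {u : ℝ} (hu : 0 ≤ u)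
    (hf : ∃ ε > (0 : ℝ), ∀ v, u ≤ v → v < u + ε → f v = f u) :
    ∀ᶠ n in atTop, f (gridAbove n u) = f u := by
  obtain ⟨ε, hε, hf⟩ := hf
  filter_upwards [(tendsto_gridAbove hu).eventually_lt_const (lt_add_of_pos_right u hε)] with n hn
  exact hf _ (lt_gridAbove n u).le hn

lemma measure_eval_mem_eq_lintegral {Ω X : Type*} [MeasurableSpace Ω] [MeasurableSpace X]
    {ν : Measure Ω} [IsFiniteMeasure ν] {Z : ℝ → Ω → X}
    (hZ : Measurable fun p : ℝ × Ω => Z p.1 p.2)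
    (hright : ∀ᵐ ω ∂ν, ∀ t, 0 ≤ t → ∃ ε > (0 : ℝ), ∀ u, t ≤ u → u < t + ε → Z u ω = Z t ω)
    {T : Ω → ℝ} (hT : Measurable T) (hT0 : ∀ ω, 0 ≤ T ω) {B : Set X} (hB : MeasurableSet B)
    {q : ℝ → ℝ≥0∞} (hq : Continuous q) (hq1 : ∀ u, 0 ≤ u → q u ≤ 1)
    (hind : ∀ (u : ℝ≥0) (E : Set ℝ), MeasurableSet E →
      ν (T ⁻¹' E ∩ Z u ⁻¹' B) = ν (T ⁻¹' E) * q u) :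
    ν {ω | Z (T ω) ω ∈ B} = ∫⁻ ω, q (T ω) ∂ν := by
  have hZg {g : Ω → ℝ} (hg : Measurable g) : MeasurableSet {ω | Z (g ω) ω ∈ B} :=
    hZ.comp (hg.prodMk measurable_id) hB
  have hTn (n : ℕ) : Measurable fun ω => (gridAbove n (T ω) : ℝ) :=
    measurable_coe_nnreal_real.comp ((measurable_gridAbove n).comp hT)
  have hdiscrete (n : ℕ) : ν {ω | Z (gridAbove n (T ω)) ω ∈ B} =
      ∫⁻ ω, q (gridAbove n (T ω)) ∂ν := by
    have hf : Measurable fun ω => ⌊((n : ℝ) + 1) * T ω⌋₊ :=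
      Nat.measurable_floor.comp (hT.const_mul _)
    rw [measure_eq_tsum_preimage_inter hf]
    refine .trans (tsum_congr fun j => ?_)
      (lintegral_comp_eq_tsum hf fun j => q (((j + 1) / (n + 1) : ℝ≥0) : ℝ)).symm
    rw [mul_comm]
    refine .trans (congrArg ν ?_) (hind ((j + 1) / (n + 1)) {u | ⌊((n : ℝ) + 1) * u⌋₊ = j} <|
      Nat.measurable_floor.comp (measurable_const_mul _) (measurableSet_singleton j))
    ext ω
    exact and_congr_right fun hω : ⌊((n : ℝ) + 1) * T ω⌋₊ = j => by
      rw [mem_ofPred_eq, gridAbove, hω, mem_preimage]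
  refine tendsto_nhds_unique (tendsto_measure_of_ae_tendsto_indicator_of_isFiniteMeasure atTop
    (hZg hT) (fun n => hZg (hTn n)) ?_) ?_
  · filter_upwards [hright] with ω hω
    filter_upwards [eventually_gridAbove_eq (hT0 ω) (hω _ (hT0 ω))] with n hn
    exact iff_of_eq (congrArg (· ∈ B) hn)
  · rw [funext hdiscrete]
    exact tendsto_lintegral_of_dominated_convergence (fun _ => 1)
      (fun n => hq.measurable.comp (hTn n))
      (fun n => ae_of_all _ fun ω => hq1 _ NNReal.zero_le_coe) (by simp)
      (ae_of_all _ fun ω => (hq.tendsto _).comp (tendsto_gridAbove (hT0 ω)))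

/-! ### The clock -/

/-- The additive functional `∫₀ᵗ w(S²_u) du`; it is the clock when `w` is a realised scenery. -/
noncomputable def additiveFunctional {d : ℕ} {Ω : Type*} (S : ℝ → Ω → (Fin (d + 1) → ℤ))
    (w : (Fin d → ℤ) → ℝ) (t : ℝ) (ω : Ω) : ℝ :=
  ∫ u in Ioc (0 : ℝ) t, w (layerPath S u ω)

/-- A measurable functional on all paths that computes `additiveFunctional S w` on the
right-continuous ones. The integral of `w` along a path is not product measurable, whereas this
one only sees the path at countably many times. -/
noncomputable def pathFunctional {d : ℕ} (w : (Fin d → ℤ) → ℝ) (t : ℝ)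
    (φ : ℝ≥0 → (Fin d → ℤ)) : ℝ :=
  (∫⁻ u in Ioc (0 : ℝ) t,
    limsup (fun n => ENNReal.ofReal (w (φ (gridAbove n u)))) atTop).toReal

lemma measurable_pathFunctional {d : ℕ} (w : (Fin d → ℤ) → ℝ) (t : ℝ) :
    Measurable (pathFunctional w t) := by
  refine (Measurable.lintegral_prod_right'
    (f := fun p : (ℝ≥0 → (Fin d → ℤ)) × ℝ =>
      limsup (fun n => ENNReal.ofReal (w (p.1 (gridAbove n p.2)))) atTop)
    (Measurable.limsup fun n => ?_)).ennreal_toReal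
  have heval : Measurable fun q : (ℝ≥0 → (Fin d → ℤ)) × ℕ =>
      ENNReal.ofReal (w (q.1 ((q.2 + 1) / (n + 1)))) :=
    measurable_from_prod_countable_left fun j =>
      ((measurable_of_countable w).comp
        (measurable_pi_apply ((j + 1) / (n + 1) : ℝ≥0))).ennreal_ofReal
  exact heval.comp (measurable_fst.prodMk
    (Nat.measurable_floor.comp ((measurable_const_mul _).comp measurable_snd)))

section Clock

variable {d : ℕ} {Ω : Type*} [MeasurableSpace Ω] {P : (Fin (d + 1) → ℤ) → Measure Ω}
  {S : ℝ → Ω → (Fin (d + 1) → ℤ)}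

lemma IsCTSRW.measurable_additiveFunctional (hS : IsCTSRW (d + 1) P S) (w : (Fin d → ℤ) → ℝ)
    (t : ℝ) : Measurable (additiveFunctional S w t) :=
  ((measurable_of_countable w).comp
    hS.measurable_layerPath_uncurry).stronglyMeasurable.integral_prod_left'.measurable

lemma additiveFunctional_nonneg {Ω : Type*} {S : ℝ → Ω → (Fin (d + 1) → ℤ)}
    {w : (Fin d → ℤ) → ℝ} (hw : ∀ x, 0 ≤ w x) (t : ℝ) (ω : Ω) :
    0 ≤ additiveFunctional S w t ω :=
  integral_nonneg fun _ => hw _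

lemma IsCTSRW.additiveFunctional_ae_eq (hS : IsCTSRW (d + 1) P S) {w : (Fin d → ℤ) → ℝ}
    (hw : ∀ x, 0 ≤ w x) (t : ℝ) :
    additiveFunctional S w t =ᵐ[P 0] fun ω => pathFunctional w t fun v => layerPath S v ω := by
  filter_upwards [hS.rightCont 0] with ω hω
  have hmeas : Measurable fun u => w (layerPath S u ω) :=
    (measurable_of_countable w).comp (hS.measurable_layerPath_uncurry.comp measurable_prodMk_right)
  rw [additiveFunctional, pathFunctional, integral_eq_lintegral_of_nonneg_ae
    (ae_of_all _ fun _ => hw _) hmeas.aestronglyMeasurable]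
  congr 1
  refine setLIntegral_congr_fun measurableSet_Ioc fun u hu => ?_
  refine (tendsto_const_nhds.congr' ?_).limsup_eq.symm
  filter_upwards [eventually_gridAbove_eq (f := fun v => S v ω) hu.1.le (hω u hu.1.le)] with n hn
  simp only [layerPath, hn]

/-- Conditionally on `S²`, the walk `S¹` is still a simple random walk, so its return probability
at the (`S²`-measurable) time `∫₀ᵗ w(S²_u) du` is that of a simple random walk at a fixed time. -/
lemma IsCTSRW.measure_layered_return_eq (hS : IsCTSRW (d + 1) P S) {w : (Fin d → ℤ) → ℝ}
    (hw : ∀ x, 0 ≤ w x) {t : ℝ} (ht : 0 ≤ t) :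
    P 0 {ω | layerPath S t ω = 0 ∧ S (additiveFunctional S w t ω) ω 0 = 0} =
      ∫⁻ ω in {ω | layerPath S t ω = 0},
        ENNReal.ofReal (lineKernel (additiveFunctional S w t ω) 0) ∂P 0 := by
  have := hS.prob 0
  have hZ : Measurable fun p : ℝ × Ω => S p.1 p.2 0 := (measurable_pi_apply 0).comp hS.meas
  have hD : MeasurableSet {ω | layerPath S t ω = 0} :=
    hS.measurable_layerPath t (measurableSet_singleton 0)
  have hA := hS.measurable_additiveFunctional w t
  rw [← measure_eval_mem_eq_lintegral (Z := fun u ω => S u ω 0) (B := {0})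
    (q := fun u => ENNReal.ofReal (lineKernel u 0)) hZ ?_ hA (additiveFunctional_nonneg hw t)
    (measurableSet_singleton 0) (ENNReal.continuous_ofReal.comp (continuous_lineKernel 0))
    (fun u hu => ENNReal.ofReal_le_one.mpr (lineKernel_le_one hu 0)) fun u E hE => ?_]
  · rw [Measure.restrict_apply' hD, inter_comm]
    rfl
  · filter_upwards [ae_restrict_of_ae (hS.rightCont 0)] with ω hω t ht
    obtain ⟨ε, hε, h⟩ := hω t ht
    exact ⟨ε, hε, fun u hu hu' => congrFun (h u hu hu') 0⟩
  · have hF : MeasurableSet {φ : ℝ≥0 → (Fin d → ℤ) | pathFunctional w t φ ∈ E ∧ φ ⟨t, ht⟩ = 0} :=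
      (measurable_pathFunctional w t hE).inter (measurable_pi_apply _ (measurableSet_singleton 0))
    have hae : (additiveFunctional S w t ⁻¹' E ∩ {ω | layerPath S t ω = 0} : Set Ω) =ᵐ[P 0]
        (fun ω (v : ℝ≥0) => layerPath S v ω) ⁻¹'
          {φ | pathFunctional w t φ ∈ E ∧ φ ⟨t, ht⟩ = 0} := by
      filter_upwards [hS.additiveFunctional_ae_eq hw t] with ω hω
      simp only [eq_iff_iff]
      change (_ ∈ E ∧ _) ↔ _
      rw [hω]
      rfl
    have hindep := (hS.indepFun_coord_zero_layerPath u).measure_inter_preimage_eq_mul _ _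
      (measurableSet_singleton 0) hF
    rw [Measure.restrict_apply' hD, Measure.restrict_apply' hD, inter_right_comm,
      measure_congr hae, mul_comm]
    refine (measure_congr (hae.inter (ae_eq_refl ((fun ω => S u ω 0) ⁻¹' {0})))).trans ?_
    rw [inter_comm, hindep]
    congr 1
    exact hS.measure_coord_zero_eq u.2

end Clock

/-! ### Self-intersections of a Markov chain -/

section SelfIntersection

variable {X : Type*} {n : ℕ}

/-- The `(j+1)`-step transition probabilities of the chain with one-step probabilities `p`. -/
noncomputable def iterKernel (p : X → X → ℝ≥0∞) : ℕ → X → X → ℝ≥0∞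
  | 0 => p
  | j + 1 => fun x y => ∑' a, p x a * iterKernel p j a y

/-- The Green function: expected number of visits to `y` during the steps `1, …, n`. -/
noncomputable def greenSum (p : X → X → ℝ≥0∞) (n : ℕ) (x y : X) : ℝ≥0∞ :=
  ∑ j ∈ Finset.range n, iterKernel p j x y

lemma greenSum_succ (p : X → X → ℝ≥0∞) (n : ℕ) (x y : X) :
    greenSum p (n + 1) x y = p x y + ∑' a, p x a * greenSum p n a y := by
  simp_rw [greenSum, Finset.sum_range_succ', Finset.mul_sum, iterKernel, add_comm (p x y)]
  rw [Summable.tsum_finsetSum fun _ _ => ENNReal.summable]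

lemma greenSum_le_succ (p : X → X → ℝ≥0∞) (n : ℕ) (x y : X) :
    greenSum p n x y ≤ greenSum p (n + 1) x y := by
  rw [greenSum, greenSum, Finset.sum_range_succ]
  exact le_self_add

variable [DecidableEq X]

/-- The local time at `x` of the path `y`. -/
def localTime (y : Fin n → X) (x : X) : ℕ := Finset.card {j | y j = x}

/-- The number of returns of the path `y` to its `i`-th position after step `i`. -/
def laterReturns (y : Fin n → X) (i : Fin n) : ℕ := Finset.card {j | i < j ∧ y j = y i}

lemma localTime_cons (a : X) (y : Fin n → X) (x : X) :
    localTime (Fin.cons a y : Fin (n + 1) → X) x = (if a = x then 1 else 0) + localTime y x := by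
  simp only [localTime, Finset.card_filter, Fin.sum_univ_succ, Fin.cons_zero, Fin.cons_succ]

lemma laterReturns_cons_zero (a : X) (y : Fin n → X) :
    laterReturns (Fin.cons a y : Fin (n + 1) → X) 0 = localTime y a := by
  simp only [laterReturns, localTime, Finset.card_filter, Fin.sum_univ_succ, Fin.cons_zero,
    Fin.cons_succ, lt_irrefl, false_and, if_false, zero_add, Fin.succ_pos, true_and]

lemma laterReturns_cons_succ (a : X) (y : Fin n → X) (i : Fin n) :
    laterReturns (Fin.cons a y : Fin (n + 1) → X) i.succ = laterReturns y i := by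
  simp only [laterReturns, Finset.card_filter, Fin.sum_univ_succ, Fin.cons_zero, Fin.cons_succ,
    Fin.not_lt_zero, false_and, if_false, zero_add, Fin.succ_lt_succ_iff]

lemma sum_localTime_eq (y : Fin n → X) :
    ∑ i, localTime y (y i) = n + 2 * ∑ i, laterReturns y i := by
  have htri (i j : Fin n) : (if y j = y i then 1 else 0) = (if i = j then 1 else 0) +
      (if i < j ∧ y j = y i then 1 else 0) + (if j < i ∧ y i = y j then 1 else 0) := by
    rcases lt_trichotomy i j with h | h | h
    · simp [h, h.ne, not_lt.mpr h.le]
    · simp [h]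
    · simp [h, h.ne', not_lt.mpr h.le, eq_comm]
  simp only [localTime, laterReturns, Finset.card_filter, htri, Finset.sum_add_distrib,
    Finset.sum_ite_eq, Finset.mem_univ, if_true, Finset.sum_const, Finset.card_univ,
    Fintype.card_fin, smul_eq_mul, mul_one]
  rw [Finset.sum_comm (f := fun i j => if j < i ∧ y i = y j then 1 else 0)]
  ring

/-- Khas'minskii's lemma: exponential moments of a local time whose expectation is small. -/
lemma tsum_chainWeight_mul_pow_localTime_le {p : X → X → ℝ≥0∞} (hp : ∀ x, ∑' y, p x y = 1)
    {β : ℝ≥0∞} {x : X} (hG : 2 * β * greenSum p n x x ≤ 1) (b : X) :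
    ∑' y : Fin n → X, chainWeight (fun _ => p) b y * (1 + β) ^ localTime y x ≤
      1 + 2 * β * greenSum p n b x := by
  induction n generalizing b with
  | zero => simp [chainWeight, localTime]
  | succ n ih =>
    have hG' : 2 * β * greenSum p n x x ≤ 1 :=
      le_trans (by gcongr; exact greenSum_le_succ p n x x) hG
    set V : X → ℝ≥0∞ := fun a =>
      ∑' y : Fin n → X, chainWeight (fun _ => p) a y * (1 + β) ^ localTime y x with hV
    have hsplit (a : X) : ∑' y : Fin n → X, chainWeight (fun _ => p) b (Fin.cons a y) *
        (1 + β) ^ localTime (Fin.cons a y : Fin (n + 1) → X) x =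
        p b a * V a + if a = x then β * (p b x * V x) else 0 := by
      simp_rw [chainWeight_cons, localTime_cons, pow_add, mul_assoc, ENNReal.tsum_mul_left,
        mul_left_comm _ ((1 + β) ^ _), ENNReal.tsum_mul_left]
      split_ifs with h
      · subst h
        ring
      · ring
    calc ∑' y : Fin (n + 1) → X, chainWeight (fun _ => p) b y * (1 + β) ^ localTime y x
        = ∑' a, p b a * V a + β * (p b x * V x) := by
          rw [tsum_fin_succ_pi, tsum_congr hsplit, ENNReal.tsum_add, tsum_ite_eq]
      _ ≤ ∑' a, p b a * (1 + 2 * β * greenSum p n a x) + β * (p b x * (1 + 1)) := by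
          gcongr with a
          · exact ih hG' a
          · exact (ih hG' x).trans (by gcongr)
      _ = 1 + 2 * β * greenSum p (n + 1) b x := by
          simp_rw [greenSum_succ, mul_add, mul_one, ENNReal.tsum_add, hp,
            mul_left_comm (p b _) (2 * β), ENNReal.tsum_mul_left]
          ring

/-- The first kernel `q` is arbitrary because a skeleton of the walk at the times `v, v + 1, …` has
a first step of length `v`. -/
lemma tsum_chainWeight_mul_pow_laterReturns_le {p : X → X → ℝ≥0∞} (hp : ∀ x, ∑' y, p x y = 1)
    {β : ℝ≥0∞} (hG : ∀ x, 2 * β * greenSum p n x x ≤ 1) {q : X → X → ℝ≥0∞}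
    (hq : ∀ x, ∑' y, q x y = 1) (b : X) (i : Fin (n + 1)) :
    ∑' y : Fin (n + 1) → X, chainWeight (Fin.cons q fun _ => p) b y *
      (1 + β) ^ laterReturns y i ≤ 2 := by
  have hstep {n : ℕ} {i : Fin (n + 1)} (h : ∀ a, ∑' y : Fin n → X, chainWeight (fun _ => p) a y *
      (1 + β) ^ laterReturns (Fin.cons a y : Fin (n + 1) → X) i ≤ 2) (q : X → X → ℝ≥0∞)
      (hq : ∀ x, ∑' y, q x y = 1) (b : X) : ∑' y : Fin (n + 1) → X,
      chainWeight (Fin.cons q fun _ => p) b y * (1 + β) ^ laterReturns y i ≤ 2 := by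
    simp_rw [tsum_fin_succ_pi, chainWeight_cons, Fin.cons_zero, Fin.cons_succ, mul_assoc,
      ENNReal.tsum_mul_left]
    calc _ ≤ ∑' a, q b a * 2 := by gcongr with a; exact h a
      _ = 2 := by rw [ENNReal.tsum_mul_right, hq, one_mul]
  induction n generalizing q b with
  | zero =>
    obtain rfl : i = 0 := Fin.fin_one_eq_zero i
    refine hstep (fun a => ?_) q hq b
    simp_rw [laterReturns_cons_zero]
    simp [chainWeight, localTime]
  | succ n ih =>
    refine hstep (fun a => ?_) q hq b
    refine Fin.cases ?_ (fun k => ?_) i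
    · simp_rw [laterReturns_cons_zero]
      calc _ ≤ 1 + 2 * β * greenSum p (n + 1) a a :=
            tsum_chainWeight_mul_pow_localTime_le hp (hG a) a
        _ ≤ 1 + 1 := by gcongr; exact hG a
        _ = 2 := one_add_one_eq_two
    · simp_rw [laterReturns_cons_succ]
      have hcons : (fun _ : Fin (n + 1) => p) = Fin.cons p fun _ => p :=
        (Fin.cons_self_tail _).symm
      rw [hcons]
      exact ih (fun x => le_trans (by gcongr; exact greenSum_le_succ p n x x) (hG x)) hp a k

/-- Jensen's inequality decouples the returns to the various positions of the path. -/
lemma exp_sum_localTime_le (hn : n ≠ 0) (y : Fin n → X) (c : ℝ) :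
    Real.exp (c * ∑ i, (localTime y (y i) : ℝ)) ≤
      Real.exp (c * n) * ((n : ℝ)⁻¹ * ∑ i, Real.exp (2 * c * n) ^ laterReturns y i) := by
  have hsum : ∑ i, (localTime y (y i) : ℝ) = n + 2 * ∑ i, (laterReturns y i : ℝ) := by
    exact_mod_cast sum_localTime_eq y
  have hjensen := convexOn_exp.map_sum_le (t := Finset.univ) (w := fun _ : Fin n => (n : ℝ)⁻¹)
    (p := fun i => 2 * c * n * laterReturns y i) (fun _ _ => by positivity) (by simp [hn])
    (fun _ _ => mem_univ _)
  simp only [smul_eq_mul, ← Finset.mul_sum] at hjensen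
  have hmean : c * (2 * ∑ i, (laterReturns y i : ℝ)) =
      (n : ℝ)⁻¹ * (2 * c * n * ∑ i, (laterReturns y i : ℝ)) := by
    field_simp
  rw [hsum, mul_add, Real.exp_add, hmean]
  gcongr
  refine hjensen.trans_eq ?_
  congr 1
  exact Finset.sum_congr rfl fun i _ => by rw [← Real.exp_nat_mul, mul_comm]

lemma tsum_chainWeight_mul_exp_sum_localTime_le {p : X → X → ℝ≥0∞}
    (hp : ∀ x, ∑' y, p x y = 1) {c : ℝ} (hc : 0 ≤ c)
    (hG : ∀ x, 2 * ENNReal.ofReal (Real.exp (2 * c * (n + 1 : ℕ)) - 1) * greenSum p n x x ≤ 1)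
    {q : X → X → ℝ≥0∞} (hq : ∀ x, ∑' y, q x y = 1) (b : X) :
    ∑' y : Fin (n + 1) → X, chainWeight (Fin.cons q fun _ => p) b y *
        ENNReal.ofReal (Real.exp (c * ∑ i, (localTime y (y i) : ℝ))) ≤
      ENNReal.ofReal (Real.exp (c * (n + 1 : ℕ))) * 2 := by
  set N := n + 1
  set β := ENNReal.ofReal (Real.exp (2 * c * N) - 1)
  have hβ : ENNReal.ofReal (Real.exp (2 * c * N)) = 1 + β := by
    rw [← ENNReal.ofReal_one, ← ENNReal.ofReal_add zero_le_one
      (sub_nonneg.mpr (Real.one_le_exp (by positivity))), add_sub_cancel]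
  have hN : ENNReal.ofReal ((N : ℝ)⁻¹) * N = 1 := by
    rw [ENNReal.ofReal_inv_of_pos (by positivity), ENNReal.ofReal_natCast]
    exact ENNReal.inv_mul_cancel (by simp [N]) (by simp)
  calc ∑' y : Fin N → X, chainWeight (Fin.cons q fun _ => p) b y *
        ENNReal.ofReal (Real.exp (c * ∑ i, (localTime y (y i) : ℝ)))
      ≤ ∑' y : Fin N → X, ENNReal.ofReal (Real.exp (c * N)) * (ENNReal.ofReal ((N : ℝ)⁻¹) *
          ∑ i, chainWeight (Fin.cons q fun _ => p) b y * (1 + β) ^ laterReturns y i) := by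
        refine ENNReal.tsum_le_tsum fun y => ?_
        rw [← Finset.mul_sum, ← hβ, mul_left_comm (ENNReal.ofReal (N : ℝ)⁻¹),
          mul_left_comm (ENNReal.ofReal (Real.exp (c * N)))]
        simp_rw [← ENNReal.ofReal_pow (Real.exp_pos _).le]
        rw [← ENNReal.ofReal_sum_of_nonneg fun i _ => by positivity,
          ← ENNReal.ofReal_mul (by positivity), ← ENNReal.ofReal_mul (by positivity)]
        gcongr
        exact exp_sum_localTime_le n.succ_ne_zero y c
    _ = ENNReal.ofReal (Real.exp (c * N)) * (ENNReal.ofReal ((N : ℝ)⁻¹) *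
          ∑ i, ∑' y : Fin N → X, chainWeight (Fin.cons q fun _ => p) b y *
            (1 + β) ^ laterReturns y i) := by
        rw [ENNReal.tsum_mul_left, ENNReal.tsum_mul_left,
          Summable.tsum_finsetSum fun _ _ => ENNReal.summable]
    _ ≤ ENNReal.ofReal (Real.exp (c * N)) * (ENNReal.ofReal ((N : ℝ)⁻¹) * ∑ _i : Fin N, 2) := by
        gcongr with i
        exact tsum_chainWeight_mul_pow_laterReturns_le hp hG hq b i
    _ = ENNReal.ofReal (Real.exp (c * N)) * 2 := by
        rw [Finset.sum_const, Finset.card_univ, Fintype.card_fin, nsmul_eq_mul, ← mul_assoc _ _ 2,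
          hN, one_mul]

end SelfIntersection

/-! ### Concentration of the clock in a bounded centred scenery -/

section Subgaussian

variable {X Ω : Type*} [MeasurableSpace Ω] {μ : Measure Ω} {w : X → Ω → ℝ} {c : ℝ≥0}

lemma hasSubgaussianMGF_sum_path [DecidableEq X] (hi : iIndepFun w μ)
    (hw : ∀ x, HasSubgaussianMGF (w x) c μ) {n : ℕ} (y : Fin n → X) :
    HasSubgaussianMGF (fun ζ => ∑ j, w (y j) ζ) (c * ∑ i, (localTime y (y i) : ℝ≥0)) μ := by
  have hindep : iIndepFun (fun x ζ => (localTime y x : ℝ) * w x ζ) μ :=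
    hi.comp (fun x r => localTime y x * r) fun x => measurable_const_mul _
  have h := HasSubgaussianMGF.sum_of_iIndepFun hindep (s := Finset.univ.image y)
    fun x _ => (hw x).const_mul (localTime y x)
  convert h using 1
  · funext ζ
    simp only [Finset.sum_comp (fun x => w x ζ) y, localTime, nsmul_eq_mul]
  · rw [Finset.sum_comp (fun x => (localTime y x : ℝ≥0)) y, Finset.mul_sum]
    refine Finset.sum_congr rfl fun x _ => NNReal.eq ?_
    change (c * (localTime y x • (localTime y x : ℝ≥0)) : ℝ) = (localTime y x : ℝ) ^ 2 * c
    push_cast [nsmul_eq_mul]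
    ring

lemma lintegral_exp_sum_path_le [DecidableEq X] (hi : iIndepFun w μ)
    (hw : ∀ x, HasSubgaussianMGF (w x) c μ) (l : ℝ) {n : ℕ} (y : Fin n → X) :
    ∫⁻ ζ, ENNReal.ofReal (Real.exp (l * ∑ j, w (y j) ζ)) ∂μ ≤
      ENNReal.ofReal (Real.exp (c * l ^ 2 / 2 * ∑ i, (localTime y (y i) : ℝ))) := by
  have h := hasSubgaussianMGF_sum_path hi hw y
  rw [← ofReal_integral_eq_lintegral_ofReal (h.integrable_exp_mul l)
    (ae_of_all _ fun _ => (Real.exp_pos _).le)]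
  refine ENNReal.ofReal_le_ofReal ((h.mgf_le l).trans_eq ?_)
  push_cast
  ring_nf

lemma ofReal_exp_integral_le_lintegral [IsProbabilityMeasure μ] {f : Ω → ℝ}
    (hf : Integrable f μ) :
    ENNReal.ofReal (Real.exp (∫ ω, f ω ∂μ)) ≤ ∫⁻ ω, ENNReal.ofReal (Real.exp (f ω)) ∂μ := by
  by_cases h : ∫⁻ ω, ENNReal.ofReal (Real.exp (f ω)) ∂μ = ⊤
  · exact h ▸ le_top
  have hexp : Integrable (fun ω => Real.exp (f ω)) μ :=
    (lintegral_ofReal_ne_top_iff_integrable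
      (Real.continuous_exp.comp_aestronglyMeasurable hf.aestronglyMeasurable)
      (ae_of_all _ fun _ => (Real.exp_pos _).le)).mp h
  rw [← ofReal_integral_eq_lintegral_ofReal hexp (ae_of_all _ fun _ => (Real.exp_pos _).le)]
  exact ENNReal.ofReal_le_ofReal <| convexOn_exp.map_integral_le
    Real.continuous_exp.continuousOn isClosed_univ (ae_of_all _ fun _ => mem_univ _) hf hexp

lemma measure_le_abs_le_exp_mul {B : Ω → ℝ} (hB : Measurable B) {l : ℝ} (hl : 0 ≤ l) (r : ℝ) :
    μ {ω | r ≤ |B ω|} ≤ ENNReal.ofReal (Real.exp (-(l * r))) *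
      (∫⁻ ω, ENNReal.ofReal (Real.exp (l * B ω)) ∂μ +
        ∫⁻ ω, ENNReal.ofReal (Real.exp (-l * B ω)) ∂μ) := by
  have hmeas (a : ℝ) : Measurable fun ω => ENNReal.ofReal (Real.exp (a * B ω)) :=
    (hB.const_mul a).exp.ennreal_ofReal
  have hexp : {ω | r ≤ |B ω|} ⊆ {ω | ENNReal.ofReal (Real.exp (l * r)) ≤
      ENNReal.ofReal (Real.exp (l * B ω)) + ENNReal.ofReal (Real.exp (-l * B ω))} := by
    intro ω (hω : r ≤ |B ω|)
    rw [mem_ofPred_eq, ← ENNReal.ofReal_add (Real.exp_pos _).le (Real.exp_pos _).le]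
    refine ENNReal.ofReal_le_ofReal ?_
    calc Real.exp (l * r) ≤ Real.exp |l * B ω| := by
          rw [abs_mul, abs_of_nonneg hl]
          gcongr
      _ ≤ Real.exp (l * B ω) + Real.exp (-l * B ω) := by
          rw [neg_mul]
          exact Real.exp_abs_le _
  rw [← lintegral_add_left (hmeas l), Real.exp_neg, ENNReal.ofReal_inv_of_pos (Real.exp_pos _),
    ← ENNReal.div_eq_inv_mul]
  exact (measure_mono hexp).trans <| meas_ge_le_lintegral_div
    ((hmeas l).add (hmeas (-l))).aemeasurable (by simp [Real.exp_pos]) ENNReal.ofReal_ne_top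

end Subgaussian

lemma sum_one_div_sqrt_le (n : ℕ) : ∑ j ∈ Finset.range n, 1 / √((j : ℝ) + 1) ≤ 2 * √n := by
  induction n with
  | zero => simp
  | succ n ih =>
    have hpos : 0 < √((n : ℝ) + 1) := Real.sqrt_pos.mpr (by positivity)
    have hstep : 1 / √((n : ℝ) + 1) ≤ 2 * √((n : ℝ) + 1) - 2 * √n := by
      rw [div_le_iff₀ hpos]
      nlinarith [sq_nonneg (√((n : ℝ) + 1) - √n), Real.sq_sqrt (n.cast_nonneg (α := ℝ)),
        Real.sq_sqrt (by positivity : (0 : ℝ) ≤ (n : ℝ) + 1)]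
    rw [Finset.sum_range_succ]
    push_cast
    linarith

lemma exists_rate_two_mul_exp_sub_one_mul_le_one {c C : ℝ} (hc : 0 ≤ c) (hC : 0 ≤ C) :
    ∃ κ : ℝ, 0 < κ ∧ ∀ s : ℝ, 1 ≤ s → κ ^ 2 * c / s ^ 2 ≤ 1 ∧
      2 * (Real.exp (κ ^ 2 * c / s ^ 2) - 1) * (C * s ^ 2) ≤ 1 := by
  set κ : ℝ := 1 / (2 * (1 + c) * (1 + C)) with hκ
  have hκle : κ ^ 2 * (4 * (1 + c) * (1 + C)) ≤ 1 := by
    have h : κ ^ 2 * (4 * (1 + c) * (1 + C)) = 1 / ((1 + c) * (1 + C)) := by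
      rw [hκ]
      field_simp
      norm_num
    rw [h]
    exact div_le_self zero_le_one (one_le_mul_of_one_le_of_one_le (by linarith) (by linarith))
  refine ⟨κ, by positivity, fun s hs => ?_⟩
  set r : ℝ := κ ^ 2 * c / s ^ 2 with hr
  have hr0 : 0 ≤ r := by positivity
  have hr1 : r ≤ 1 := by
    refine (div_le_self (by positivity) (one_le_pow₀ hs)).trans (le_trans ?_ hκle)
    gcongr
    nlinarith
  have hexp : Real.exp r - 1 ≤ 2 * r := by
    simpa only [abs_of_nonneg hr0] using (le_abs_self _).trans
      (Real.abs_exp_sub_one_le ((abs_of_nonneg hr0).trans_le hr1))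
  refine ⟨hr1, ?_⟩
  calc 2 * (Real.exp r - 1) * (C * s ^ 2) ≤ 2 * (2 * r) * (C * s ^ 2) := by gcongr
    _ = κ ^ 2 * (4 * c * C) := by
        rw [hr]
        field_simp
        ring
    _ ≤ κ ^ 2 * (4 * (1 + c) * (1 + C)) := by gcongr <;> linarith
    _ ≤ 1 := hκle

lemma summable_pow_mul_exp_neg_sqrt_sqrt (D : ℕ) {a : ℝ} (ha : 0 < a) :
    Summable fun n : ℕ => ((n + 1 : ℕ) : ℝ) ^ D * Real.exp (-(a * √√(n + 1 : ℕ))) := by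
  have hsum : Summable fun n : ℕ =>
      ((4 * (D + 2)).factorial / a ^ (4 * (D + 2)) : ℝ) * (1 / ((n + 1 : ℕ) : ℝ) ^ 2) :=
    ((summable_nat_add_iff 1).mpr (Real.summable_one_div_nat_pow.mpr one_lt_two)).mul_left _
  refine hsum.of_nonneg_of_le (fun n => by positivity) fun n => ?_
  set N : ℝ := ((n + 1 : ℕ) : ℝ)
  have hN : 0 < N := by positivity
  have hsqrt : √√N ^ 4 = N := by
    rw [pow_mul _ 2 2, Real.sq_sqrt (Real.sqrt_nonneg _), Real.sq_sqrt hN.le]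
  have hexp := Real.pow_div_factorial_le_exp (x := a * √√N) (by positivity) (4 * (D + 2))
  rw [mul_pow, pow_mul √√N, hsqrt] at hexp
  calc N ^ D * Real.exp (-(a * √√N))
      ≤ N ^ D * (a ^ (4 * (D + 2)) * N ^ (D + 2) / (4 * (D + 2)).factorial)⁻¹ := by
        rw [Real.exp_neg]
        gcongr
    _ = (4 * (D + 2)).factorial / a ^ (4 * (D + 2)) * (1 / N ^ 2) := by
        rw [pow_add]
        field_simp

section Annealed

variable {d : ℕ} {Ω : Type*} [MeasurableSpace Ω] {P : (Fin (d + 1) → ℤ) → Measure Ω}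
  {S : ℝ → Ω → (Fin (d + 1) → ℤ)}

lemma IsCTSRW.iterKernel_heatKernelENN (hS : IsCTSRW (d + 1) P S) (j : ℕ) (x y : Fin d → ℤ) :
    iterKernel (heatKernelENN d 1) j x y = heatKernelENN d (j + 1) x y := by
  induction j generalizing x with
  | zero => simp [iterKernel]
  | succ j ih =>
    simp_rw [iterKernel, ih]
    rw [hS.tsum_heatKernelENN_mul zero_le_one (by positivity)]
    push_cast
    rw [add_comm]

lemma IsCTSRW.exists_greenSum_heatKernelENN_le (hd : 1 ≤ d) (hS : IsCTSRW (d + 1) P S) :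
    ∃ C : ℝ, 0 < C ∧ ∀ n x, greenSum (heatKernelENN d 1) n x x ≤ ENNReal.ofReal (C * √n) := by
  obtain ⟨C, hC, hdiag⟩ := exists_lineKernel_le_div_sqrt
  refine ⟨C * 2, by positivity, fun n x => ?_⟩
  have hterm (j : ℕ) : iterKernel (heatKernelENN d 1) j x x ≤
      ENNReal.ofReal (C * (1 / √((j : ℝ) + 1))) := by
    have ht : (0 : ℝ) ≤ j + 1 := by positivity
    rw [hS.iterKernel_heatKernelENN, heatKernelENN_self, mul_one_div]
    exact ENNReal.ofReal_le_ofReal <| (pow_le_of_le_one (lineKernel_nonneg ht 0)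
      (lineKernel_le_one ht 0) (by lia)).trans (hdiag j)
  refine (Finset.sum_le_sum fun j _ => hterm j).trans ?_
  rw [← ENNReal.ofReal_sum_of_nonneg fun j _ => by positivity, ← Finset.mul_sum, mul_assoc]
  gcongr
  exact sum_one_div_sqrt_le n

lemma IsCTSRW.measure_layerPath_add_nat_eq (hS : IsCTSRW (d + 1) P S) {v : ℝ} (hv : 0 ≤ v) {n : ℕ}
    (y : Fin (n + 1) → (Fin d → ℤ)) :
    P 0 ((fun ω (i : Fin (n + 1)) => layerPath S (v + (i : ℕ)) ω) ⁻¹' {y}) =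
      chainWeight (Fin.cons (heatKernelENN d v) fun _ => heatKernelENN d 1) 0 y := by
  have hmono : Monotone fun i : Fin (n + 1) => v + ((i : ℕ) : ℝ) := fun i j hij => by
    dsimp only
    gcongr
    exact hij
  rw [(hS.law_and_indepFun_components (by simpa using hv) hmono 0).2.1 y, tail_zero]
  congr 1
  funext i
  refine Fin.cases ?_ (fun k => ?_) i
  · simp [timeGap_zero]
  · simp [timeGap_succ]

variable {Ωz : Type*} [MeasurableSpace Ωz] {μ : Measure Ωz} {w : (Fin d → ℤ) → Ωz → ℝ} {c : ℝ≥0}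

lemma IsCTSRW.lintegral_exp_sum_layerPath_le (hS : IsCTSRW (d + 1) P S) (hi : iIndepFun w μ)
    (hsub : ∀ x, HasSubgaussianMGF (w x) c μ) {l : ℝ} {n : ℕ}
    (hG : ∀ x, 2 * ENNReal.ofReal (Real.exp (2 * (c * l ^ 2 / 2) * (n + 1 : ℕ)) - 1) *
      greenSum (heatKernelENN d 1) n x x ≤ 1) {v : ℝ} (hv : 0 ≤ v) :
    ∫⁻ ω, ∫⁻ ζ, ENNReal.ofReal
        (Real.exp (l * ∑ j : Fin (n + 1), w (layerPath S (v + (j : ℕ)) ω) ζ)) ∂μ ∂P 0 ≤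
      ENNReal.ofReal (Real.exp (c * l ^ 2 / 2 * (n + 1 : ℕ))) * 2 := by
  have hpath : Measurable fun ω (i : Fin (n + 1)) => layerPath S (v + (i : ℕ)) ω :=
    measurable_pi_lambda _ fun i => hS.measurable_layerPath _
  refine (lintegral_mono fun ω => lintegral_exp_sum_path_le hi hsub l
    fun j : Fin (n + 1) => layerPath S (v + (j : ℕ)) ω).trans ?_
  rw [lintegral_comp_eq_tsum hpath fun y : Fin (n + 1) → (Fin d → ℤ) =>
    ENNReal.ofReal (Real.exp (c * l ^ 2 / 2 * ∑ i, (localTime y (y i) : ℝ)))]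
  simp_rw [hS.measure_layerPath_add_nat_eq hv, mul_comm (ENNReal.ofReal _) (chainWeight _ _ _)]
  exact tsum_chainWeight_mul_exp_sum_localTime_le (tsum_heatKernelENN zero_le_one) (by positivity)
    hG (tsum_heatKernelENN hv) 0

lemma IsCTSRW.measurable_scenery_layerPath (hS : IsCTSRW (d + 1) P S)
    (hw : ∀ x, Measurable (w x)) :
    Measurable fun p : Ωz × (ℝ × Ω) => w (layerPath S p.2.1 p.2.2) p.1 :=
  (measurable_from_prod_countable_left (f := fun q : Ωz × (Fin d → ℤ) => w q.2 q.1) hw).comp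
    (measurable_fst.prodMk (hS.measurable_layerPath_uncurry.comp measurable_snd))

lemma IsCTSRW.measurable_additiveFunctional_uncurry (hS : IsCTSRW (d + 1) P S)
    (hw : ∀ x, Measurable (w x)) (t : ℝ) :
    Measurable fun p : Ωz × Ω => additiveFunctional S (fun x => w x p.1) t p.2 :=
  ((hS.measurable_scenery_layerPath hw).comp (by fun_prop :
    Measurable fun q : (Ωz × Ω) × ℝ => (q.1.1, (q.2, q.1.2)))).stronglyMeasurable
      |>.integral_prod_right'.measurable

lemma IsCTSRW.integrableOn_comp_layerPath (hS : IsCTSRW (d + 1) P S) {w : (Fin d → ℤ) → ℝ} {K : ℝ}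
    (hK : ∀ x, |w x| ≤ K) (ω : Ω) (s a b : ℝ) :
    IntegrableOn (fun u => w (layerPath S (u + s) ω)) (Ioc a b) := by
  refine Measure.integrableOn_of_bounded (M := K) (by simp) ?_ (ae_of_all _ fun u => hK _)
  exact ((measurable_of_countable w).comp (hS.measurable_layerPath_uncurry.comp
    (by fun_prop : Measurable fun u : ℝ => (u + s, ω)))).aestronglyMeasurable

lemma IsCTSRW.additiveFunctional_natCast_eq (hS : IsCTSRW (d + 1) P S) {w : (Fin d → ℤ) → ℝ}
    {K : ℝ} (hK : ∀ x, |w x| ≤ K) (n : ℕ) (ω : Ω) :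
    additiveFunctional S w n ω =
      ∫ v in Ioc (0 : ℝ) 1, ∑ j : Fin n, w (layerPath S (v + (j : ℕ)) ω) := by
  have hint (a b : ℝ) : IntervalIntegrable (fun u => w (layerPath S u ω)) volume a b := by
    have h := hS.integrableOn_comp_layerPath hK ω 0 (min a b) (max a b)
    simp only [add_zero] at h
    exact intervalIntegrable_iff.mpr h
  have hsum := intervalIntegral.sum_integral_adjacent_intervals
    (f := fun u => w (layerPath S u ω)) (a := fun k : ℕ => (k : ℝ)) (n := n)
    fun k _ => hint _ _
  rw [additiveFunctional, ← intervalIntegral.integral_of_le (by positivity), ← Nat.cast_zero,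
    ← hsum, integral_finsetSum _ fun j _ => hS.integrableOn_comp_layerPath hK ω _ _ _,
    Finset.sum_range]
  refine Finset.sum_congr rfl fun j _ => ?_
  rw [← intervalIntegral.integral_of_le (by simp),
    intervalIntegral.integral_comp_add_right fun u => w (layerPath S u ω)]
  congr 1 <;> push_cast <;> ring

/-- Jensen's inequality transfers the bound from the skeleton of the walk at the times
`v, v + 1, …`, for each `v`, to the average over `v ∈ (0, 1]`, which is the clock. -/
lemma IsCTSRW.lintegral_exp_additiveFunctional_le (hS : IsCTSRW (d + 1) P S)
    [IsProbabilityMeasure μ] (hw : ∀ x, Measurable (w x)) (hi : iIndepFun w μ)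
    (hsub : ∀ x, HasSubgaussianMGF (w x) c μ) {K : ℝ} (hK : ∀ x ζ, |w x ζ| ≤ K) {l : ℝ} {n : ℕ}
    (hG : ∀ x, 2 * ENNReal.ofReal (Real.exp (2 * (c * l ^ 2 / 2) * (n + 1 : ℕ)) - 1) *
      greenSum (heatKernelENN d 1) n x x ≤ 1) :
    ∫⁻ p : Ωz × Ω, ENNReal.ofReal
        (Real.exp (l * additiveFunctional S (fun x => w x p.1) (n + 1 : ℕ) p.2)) ∂μ.prod (P 0) ≤
      ENNReal.ofReal (Real.exp (c * l ^ 2 / 2 * (n + 1 : ℕ))) * 2 := by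
  have := hS.prob 0
  have hprob : IsProbabilityMeasure (volume.restrict (Ioc (0 : ℝ) 1)) := ⟨by simp⟩
  set skeleton : Ωz × Ω → ℝ → ℝ := fun p v =>
    l * ∑ j : Fin (n + 1), w (layerPath S (v + (j : ℕ)) p.2) p.1
  have hmeas : Measurable fun q : (Ωz × Ω) × ℝ =>
      ENNReal.ofReal (Real.exp (skeleton q.1 q.2)) := by
    refine (Measurable.const_mul (Finset.measurable_sum _ fun j _ => ?_) l).exp.ennreal_ofReal
    exact (hS.measurable_scenery_layerPath hw).comp (by fun_prop :
      Measurable fun q : (Ωz × Ω) × ℝ => (q.1.1, (q.2 + ((j : ℕ) : ℝ), q.1.2)))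
  have hjensen (p : Ωz × Ω) : ENNReal.ofReal
      (Real.exp (l * additiveFunctional S (fun x => w x p.1) (n + 1 : ℕ) p.2)) ≤
      ∫⁻ v in Ioc (0 : ℝ) 1, ENNReal.ofReal (Real.exp (skeleton p v)) := by
    rw [hS.additiveFunctional_natCast_eq (fun x => hK x p.1), ← integral_const_mul]
    exact ofReal_exp_integral_le_lintegral <| (integrable_finsetSum _ fun j _ =>
      hS.integrableOn_comp_layerPath (fun x => hK x p.1) p.2 _ _ _).const_mul l
  calc _ ≤ ∫⁻ p, (∫⁻ v in Ioc (0 : ℝ) 1, ENNReal.ofReal (Real.exp (skeleton p v))) ∂μ.prod (P 0) :=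
        lintegral_mono hjensen
    _ = ∫⁻ v in Ioc (0 : ℝ) 1, ∫⁻ p, ENNReal.ofReal (Real.exp (skeleton p v)) ∂μ.prod (P 0) :=
        lintegral_lintegral_swap hmeas.aemeasurable
    _ = ∫⁻ v in Ioc (0 : ℝ) 1,
          ∫⁻ ω, ∫⁻ ζ, ENNReal.ofReal (Real.exp (skeleton (ζ, ω) v)) ∂μ ∂P 0 := by
        refine lintegral_congr fun v => lintegral_prod_symm _ ?_
        exact (hmeas.comp measurable_prodMk_right).aemeasurable
    _ ≤ ∫⁻ v in Ioc (0 : ℝ) 1, ENNReal.ofReal (Real.exp (c * l ^ 2 / 2 * (n + 1 : ℕ))) * 2 :=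
        setLIntegral_mono measurable_const fun v hv =>
          hS.lintegral_exp_sum_layerPath_le hi hsub hG hv.1.le
    _ = _ := by simp

/-- With `s = N^{1/4}`, an exponential rate of order `s⁻³` makes the Green function condition of
`IsCTSRW.lintegral_exp_additiveFunctional_le` hold. -/
lemma IsCTSRW.exists_lintegral_exp_additiveFunctional_le (hd : 1 ≤ d) (hS : IsCTSRW (d + 1) P S)
    [IsProbabilityMeasure μ] (hw : ∀ x, Measurable (w x)) (hi : iIndepFun w μ)
    (hsub : ∀ x, HasSubgaussianMGF (w x) c μ) {K : ℝ} (hK : ∀ x ζ, |w x ζ| ≤ K) :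
    ∃ κ : ℝ, 0 < κ ∧ ∀ (n : ℕ) (l : ℝ), l ^ 2 = (κ / √√(n + 1 : ℕ) ^ 3) ^ 2 →
      ∫⁻ p : Ωz × Ω, ENNReal.ofReal (Real.exp
          (l * additiveFunctional S (fun x => w x p.1) (n + 1 : ℕ) p.2)) ∂μ.prod (P 0) ≤
        ENNReal.ofReal (2 * Real.exp 1) := by
  obtain ⟨C, hC, hgreen⟩ := hS.exists_greenSum_heatKernelENN_le hd
  obtain ⟨κ, hκ, hrate⟩ := exists_rate_two_mul_exp_sub_one_mul_le_one c.coe_nonneg hC.le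
  refine ⟨κ, hκ, fun n l hl => ?_⟩
  set N : ℕ := n + 1
  set s : ℝ := √√N
  have hs2 : s ^ 2 = √N := Real.sq_sqrt (Real.sqrt_nonneg _)
  have hs4 : s ^ 4 = N := by rw [pow_mul s 2 2, hs2, Real.sq_sqrt (by positivity)]
  obtain ⟨hrate_le, hexp⟩ := hrate s (by simp [s, N])
  have hl' : c * l ^ 2 / 2 * N = κ ^ 2 * c / s ^ 2 / 2 := by
    rw [hl, ← hs4]
    field_simp
  refine (hS.lintegral_exp_additiveFunctional_le hw hi hsub hK fun x => ?_).trans ?_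
  · rw [mul_assoc 2 (c * l ^ 2 / 2 : ℝ), hl', mul_div_cancel₀ _ two_ne_zero]
    calc _ ≤ ENNReal.ofReal 2 * ENNReal.ofReal (Real.exp (κ ^ 2 * c / s ^ 2) - 1) *
          ENNReal.ofReal (C * √N) := by
          gcongr
          · simp
          · exact (greenSum_le_succ _ n x x).trans (hgreen N x)
      _ = ENNReal.ofReal (2 * (Real.exp (κ ^ 2 * c / s ^ 2) - 1) * (C * s ^ 2)) := by
          rw [← ENNReal.ofReal_mul zero_le_two, ← ENNReal.ofReal_mul' (by positivity), hs2]
      _ ≤ 1 := ENNReal.ofReal_le_one.mpr hexp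
  · rw [hl', mul_comm, ← ENNReal.ofReal_ofNat 2, ← ENNReal.ofReal_mul zero_le_two]
    gcongr
    linarith

lemma IsCTSRW.exists_measure_le_abs_additiveFunctional_le (hd : 1 ≤ d) (hS : IsCTSRW (d + 1) P S)
    [IsProbabilityMeasure μ] (hw : ∀ x, Measurable (w x)) (hi : iIndepFun w μ)
    (hsub : ∀ x, HasSubgaussianMGF (w x) c μ) {K : ℝ} (hK : ∀ x ζ, |w x ζ| ≤ K) :
    ∃ κ : ℝ, 0 < κ ∧ ∀ (ε : ℝ) (n : ℕ), (μ.prod (P 0)) {p : Ωz × Ω |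
        ε * (n + 1 : ℕ) ≤ |additiveFunctional S (fun x => w x p.1) (n + 1 : ℕ) p.2|} ≤
      ENNReal.ofReal (4 * Real.exp 1 * Real.exp (-(κ * ε * √√(n + 1 : ℕ)))) := by
  have := hS.prob 0
  obtain ⟨κ, hκ, hexp⟩ := hS.exists_lintegral_exp_additiveFunctional_le hd hw hi hsub hK
  refine ⟨κ, hκ, fun ε n => ?_⟩
  set s : ℝ := √√(n + 1 : ℕ)
  have hs : 0 < s := by positivity
  have hs4 : s ^ 4 = (n + 1 : ℕ) := by
    rw [show s ^ 4 = (s ^ 2) ^ 2 by ring, Real.sq_sqrt (Real.sqrt_nonneg _),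
      Real.sq_sqrt (by positivity)]
  have hrate : κ / s ^ 3 * (ε * (n + 1 : ℕ)) = κ * ε * s := by
    rw [← hs4]
    field_simp
  refine (measure_le_abs_le_exp_mul (hS.measurable_additiveFunctional_uncurry hw _)
    (l := κ / s ^ 3) (by positivity) _).trans ?_
  calc _ ≤ ENNReal.ofReal (Real.exp (-(κ / s ^ 3 * (ε * (n + 1 : ℕ))))) *
        (ENNReal.ofReal (2 * Real.exp 1) + ENNReal.ofReal (2 * Real.exp 1)) := by
        gcongr
        · exact hexp n _ rfl
        · exact hexp n _ (neg_sq _)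
    _ = _ := by
        rw [hrate, ← ENNReal.ofReal_add (by positivity) (by positivity),
          ← ENNReal.ofReal_mul (by positivity)]
        congr 1
        ring

/-- Borel–Cantelli turns the annealed bound into a quenched one. -/
lemma IsCTSRW.ae_tendsto_measure_le_abs_additiveFunctional (hd : 1 ≤ d) (hS : IsCTSRW (d + 1) P S)
    [IsProbabilityMeasure μ] (hw : ∀ x, Measurable (w x)) (hi : iIndepFun w μ)
    {K : ℝ} (hK : ∀ x ζ, |w x ζ| ≤ K) (hmean : ∀ x, ∫ ζ, w x ζ ∂μ = 0) {ε : ℝ} (hε : 0 < ε)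
    (D : ℕ) :
    ∀ᵐ ζ ∂μ, Tendsto (fun n : ℕ => ENNReal.ofReal ((n : ℝ) ^ D) *
      P 0 {ω | ε * n ≤ |additiveFunctional S (fun x => w x ζ) n ω|}) atTop (𝓝 0) := by
  have := hS.prob 0
  obtain ⟨κ, hκ, hbound⟩ := hS.exists_measure_le_abs_additiveFunctional_le hd hw hi
    (fun x => hasSubgaussianMGF_of_mem_Icc_of_integral_eq_zero (hw x).aemeasurable
      (ae_of_all _ fun ζ => abs_le.mp (hK x ζ)) (hmean x)) hK
  set E : ℕ → Set (Ωz × Ω) := fun n =>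
    {p | ε * (n + 1 : ℕ) ≤ |additiveFunctional S (fun x => w x p.1) (n + 1 : ℕ) p.2|}
  have hE (n : ℕ) : MeasurableSet (E n) :=
    measurableSet_le measurable_const (hS.measurable_additiveFunctional_uncurry hw _).abs
  have hmeas (n : ℕ) : Measurable fun ζ =>
      ENNReal.ofReal (((n + 1 : ℕ) : ℝ) ^ D) * P 0 (Prod.mk ζ ⁻¹' E n) :=
    (measurable_measure_prodMk_left (hE n)).const_mul _
  have hsum : ∫⁻ ζ, ∑' n : ℕ,
      ENNReal.ofReal (((n + 1 : ℕ) : ℝ) ^ D) * P 0 (Prod.mk ζ ⁻¹' E n) ∂μ ≠ ⊤ := by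
    rw [lintegral_tsum fun n => (hmeas n).aemeasurable]
    refine ne_top_of_le_ne_top ((summable_pow_mul_exp_neg_sqrt_sqrt D (mul_pos hκ hε)).mul_left
      (4 * Real.exp 1)).tsum_ofReal_ne_top (ENNReal.tsum_le_tsum fun n => ?_)
    rw [lintegral_const_mul _ (measurable_measure_prodMk_left (hE n)),
      ← Measure.prod_apply (hE n), mul_left_comm, ENNReal.ofReal_mul (by positivity)]
    gcongr
    exact hbound ε n
  filter_upwards [ae_lt_top' (AEMeasurable.tsum fun n => (hmeas n).aemeasurable) hsum] with ζ hζ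
  exact (tendsto_add_atTop_iff_nat 1).mp (ENNReal.tendsto_atTop_zero_of_tsum_ne_top hζ.ne)

end Annealed

/-! ### The maximal ergodic inequality for random sceneries -/

section Kernel

variable {X : Type*}

/-- The action `(p h)(x) = ∑ y, p x y * h y` of a transition kernel on functions. -/
noncomputable def kernelApply (p : X → X → ℝ≥0∞) (h : X → ℝ≥0∞) (x : X) : ℝ≥0∞ :=
  ∑' y, p x y * h y

/-- The expected reward collected in `n` steps of the chain with kernel `p`, when a step begun at
`x` earns `(r g)(x)` on average. -/
noncomputable def rewardSum (r p : X → X → ℝ≥0∞) (g : X → ℝ≥0∞) : ℕ → X → ℝ≥0∞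
  | 0 => fun _ => 0
  | n + 1 => fun x => kernelApply r g x + kernelApply p (rewardSum r p g n) x

/-- The variant of `rewardSum` in which each step costs `l` and the balance is kept nonnegative by
truncated subtraction; it plays the role of the running maximum in the maximal ergodic
inequality. -/
noncomputable def reflectedRewardSum (r p : X → X → ℝ≥0∞) (l : ℝ≥0∞) (g : X → ℝ≥0∞) :
    ℕ → X → ℝ≥0∞
  | 0 => fun _ => 0
  | n + 1 => fun x => kernelApply r g x + kernelApply p (reflectedRewardSum r p l g n) x - l

lemma kernelApply_mono (p : X → X → ℝ≥0∞) {h h' : X → ℝ≥0∞} (hh : h ≤ h') :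
    kernelApply p h ≤ kernelApply p h' :=
  fun x => ENNReal.tsum_le_tsum fun y => mul_le_mul_right (hh y) (p x y)

lemma kernelApply_add_const {p : X → X → ℝ≥0∞} (hp : ∀ x, ∑' y, p x y = 1) (h : X → ℝ≥0∞)
    (c : ℝ≥0∞) (x : X) : kernelApply p (fun y => h y + c) x = kernelApply p h x + c := by
  simp_rw [kernelApply, mul_add]
  rw [ENNReal.tsum_add, ENNReal.tsum_mul_right, hp, one_mul]

lemma rewardSum_le_reflectedRewardSum_add {p : X → X → ℝ≥0∞} (r : X → X → ℝ≥0∞)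
    (hp : ∀ x, ∑' y, p x y = 1) (l : ℝ≥0∞) (g : X → ℝ≥0∞) (n : ℕ) (x : X) :
    rewardSum r p g n x ≤ reflectedRewardSum r p l g n x + n * l := by
  induction n generalizing x with
  | zero => simp [rewardSum]
  | succ n ih =>
    calc rewardSum r p g (n + 1) x
        ≤ kernelApply r g x + kernelApply p (fun y => reflectedRewardSum r p l g n y + n * l) x :=
          add_le_add_right (kernelApply_mono p ih x) _
      _ = kernelApply r g x + kernelApply p (reflectedRewardSum r p l g n) x + n * l := by
          rw [kernelApply_add_const hp, add_assoc]
      _ ≤ (reflectedRewardSum r p l g (n + 1) x + l) + n * l :=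
          add_le_add_left le_tsub_add _
      _ = reflectedRewardSum r p l g (n + 1) x + (n + 1 : ℕ) * l := by
          push_cast
          ring

lemma monotone_reflectedRewardSum (r p : X → X → ℝ≥0∞) (l : ℝ≥0∞) (g : X → ℝ≥0∞) :
    Monotone (reflectedRewardSum r p l g) := by
  refine monotone_nat_of_le_succ fun n => ?_
  induction n with
  | zero => exact fun x => zero_le
  | succ n ih =>
    exact fun x => tsub_le_tsub_right (add_le_add_right (kernelApply_mono p ih x) _) l

/-- Where the balance is positive no truncation takes place, so the step pays its cost in full. -/
lemma reflectedRewardSum_add_indicator_le (r p : X → X → ℝ≥0∞) (l : ℝ≥0∞) (g : X → ℝ≥0∞) (n : ℕ)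
    (x : X) :
    reflectedRewardSum r p l g n x + {b : ℝ≥0∞ | 0 < b}.indicator (fun _ => l)
        (reflectedRewardSum r p l g n x) ≤
      kernelApply r g x + kernelApply p (reflectedRewardSum r p l g n) x := by
  cases n with
  | zero => simp [reflectedRewardSum]
  | succ n =>
    refine le_trans ?_ (add_le_add_right
      (kernelApply_mono p (monotone_reflectedRewardSum r p l g n.le_succ) x) _)
    rcases eq_zero_or_pos (reflectedRewardSum r p l g (n + 1) x) with h | h
    · simp [h]
    · rw [indicator_of_mem (by exact h)]
      exact (tsub_add_cancel_of_le (tsub_pos_iff_lt.mp h).le).le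

section Translation

variable [AddGroup X] {r p : X → X → ℝ≥0∞}

lemma kernelApply_add_right (hp : ∀ x y a, p (x + a) (y + a) = p x y) (h : X → ℝ≥0∞) (a x : X) :
    kernelApply p h (x + a) = kernelApply p (fun y => h (y + a)) x := by
  rw [kernelApply, ← (Equiv.addRight a).tsum_eq]
  simp [kernelApply, hp]

lemma reflectedRewardSum_add_right (hr : ∀ x y a, r (x + a) (y + a) = r x y)
    (hp : ∀ x y a, p (x + a) (y + a) = p x y) (l : ℝ≥0∞) (g : X → ℝ≥0∞) (n : ℕ) (x a : X) :
    reflectedRewardSum r p l g n (x + a) =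
      reflectedRewardSum r p l (fun y => g (y + a)) n x := by
  induction n generalizing x with
  | zero => rfl
  | succ n ih =>
    simp_rw [reflectedRewardSum, kernelApply_add_right hr, kernelApply_add_right hp, ih]

end Translation

variable [Countable X] {Ω : Type*} [MeasurableSpace Ω] {μ : Measure Ω}

lemma measurable_kernelApply (p : X → X → ℝ≥0∞) {h : Ω → X → ℝ≥0∞}
    (hh : ∀ x, Measurable fun ζ => h ζ x) (x : X) : Measurable fun ζ => kernelApply p (h ζ) x :=
  Measurable.tsum fun y => (hh y).const_mul _

lemma lintegral_kernelApply {p : X → X → ℝ≥0∞} (hp : ∀ x, ∑' y, p x y = 1) {h : Ω → X → ℝ≥0∞}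
    (hh : ∀ x, Measurable fun ζ => h ζ x) {c : ℝ≥0∞} (hc : ∀ x, ∫⁻ ζ, h ζ x ∂μ = c) (x : X) :
    ∫⁻ ζ, kernelApply p (h ζ) x ∂μ = c := by
  simp_rw [kernelApply]
  rw [lintegral_tsum fun y => ((hh y).const_mul _).aemeasurable]
  simp_rw [lintegral_const_mul _ (hh _), hc]
  rw [ENNReal.tsum_mul_right, hp, one_mul]

lemma measurable_reflectedRewardSum (r p : X → X → ℝ≥0∞) (l : ℝ≥0∞) (n : ℕ) (x : X) :
    Measurable fun g : X → ℝ≥0∞ => reflectedRewardSum r p l g n x := by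
  induction n generalizing x with
  | zero => exact measurable_const
  | succ n ih =>
    exact ((measurable_kernelApply r measurable_pi_apply x).add
      (measurable_kernelApply p ih x)).sub_const l

variable [AddGroup X] {r p : X → X → ℝ≥0∞} {g : X → Ω → ℝ≥0∞}

lemma lintegral_reflectedRewardSum_add_right (hr : ∀ x y a, r (x + a) (y + a) = r x y)
    (hp : ∀ x y a, p (x + a) (y + a) = p x y)
    (hst : ∀ a, IdentDistrib (fun ζ x => g (x + a) ζ) (fun ζ x => g x ζ) μ μ) (l : ℝ≥0∞) (n : ℕ)
    (a : X) :
    ∫⁻ ζ, reflectedRewardSum r p l (fun x => g x ζ) n a ∂μ =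
      ∫⁻ ζ, reflectedRewardSum r p l (fun x => g x ζ) n 0 ∂μ := by
  refine (lintegral_congr fun ζ => ?_).trans
    ((hst a).comp (measurable_reflectedRewardSum r p l n 0)).lintegral_eq
  have h := reflectedRewardSum_add_right hr hp l (fun x => g x ζ) n 0 a
  rw [zero_add] at h
  exact h

lemma mul_measure_reflectedRewardSum_pos_le [IsProbabilityMeasure μ]
    (hr : ∀ x y a, r (x + a) (y + a) = r x y) (hp : ∀ x y a, p (x + a) (y + a) = p x y)
    (hr1 : ∀ x, ∑' y, r x y = 1) (hp1 : ∀ x, ∑' y, p x y = 1) (hg : ∀ x, Measurable (g x))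
    (hst : ∀ a, IdentDistrib (fun ζ x => g (x + a) ζ) (fun ζ x => g x ζ) μ μ)
    (hfin : ∫⁻ ζ, g 0 ζ ∂μ ≠ ⊤) (l : ℝ≥0∞) (n : ℕ) :
    l * μ {ζ | 0 < reflectedRewardSum r p l (fun x => g x ζ) n 0} ≤ ∫⁻ ζ, g 0 ζ ∂μ := by
  have hM (n : ℕ) (x : X) : Measurable fun ζ => reflectedRewardSum r p l (fun x => g x ζ) n x :=
    (measurable_reflectedRewardSum r p l n x).comp (measurable_pi_lambda _ hg)
  have hstep (n : ℕ) : ∫⁻ ζ, (kernelApply r (fun x => g x ζ) 0 +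
      kernelApply p (reflectedRewardSum r p l (fun x => g x ζ) n) 0) ∂μ =
      ∫⁻ ζ, g 0 ζ ∂μ + ∫⁻ ζ, reflectedRewardSum r p l (fun x => g x ζ) n 0 ∂μ := by
    have hgx (x : X) : ∫⁻ ζ, g x ζ ∂μ = ∫⁻ ζ, g 0 ζ ∂μ := by
      simpa [Function.comp_def] using ((hst x).comp (measurable_pi_apply 0)).lintegral_eq
    rw [lintegral_add_left (measurable_kernelApply r hg 0), lintegral_kernelApply hr1 hg hgx,
      lintegral_kernelApply hp1 (hM n) (lintegral_reflectedRewardSum_add_right hr hp hst l n)]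
  have hMfin (n : ℕ) : ∫⁻ ζ, reflectedRewardSum r p l (fun x => g x ζ) n 0 ∂μ ≠ ⊤ := by
    induction n with
    | zero => simp [reflectedRewardSum]
    | succ n ih =>
      refine ne_top_of_le_ne_top (ENNReal.add_ne_top.mpr ⟨hfin, ih⟩) ?_
      rw [← hstep n]
      exact lintegral_mono fun ζ => tsub_le_self
  have hpos : MeasurableSet {ζ | 0 < reflectedRewardSum r p l (fun x => g x ζ) n 0} :=
    measurableSet_lt measurable_const (hM n 0)
  have hle : ∫⁻ ζ, reflectedRewardSum r p l (fun x => g x ζ) n 0 ∂μ +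
      l * μ {ζ | 0 < reflectedRewardSum r p l (fun x => g x ζ) n 0} ≤
      ∫⁻ ζ, reflectedRewardSum r p l (fun x => g x ζ) n 0 ∂μ + ∫⁻ ζ, g 0 ζ ∂μ := by
    rw [add_comm _ (∫⁻ ζ, g 0 ζ ∂μ), ← hstep, ← lintegral_indicator_const hpos,
      ← lintegral_add_left (hM n 0)]
    exact lintegral_mono fun ζ => reflectedRewardSum_add_indicator_le r p l _ n 0
  exact (ENNReal.add_le_add_iff_left (hMfin n)).mp hle

theorem mul_measure_exists_lt_rewardSum_le [IsProbabilityMeasure μ]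
    (hr : ∀ x y a, r (x + a) (y + a) = r x y) (hp : ∀ x y a, p (x + a) (y + a) = p x y)
    (hr1 : ∀ x, ∑' y, r x y = 1) (hp1 : ∀ x, ∑' y, p x y = 1) (hg : ∀ x, Measurable (g x))
    (hst : ∀ a, IdentDistrib (fun ζ x => g (x + a) ζ) (fun ζ x => g x ζ) μ μ)
    (hfin : ∫⁻ ζ, g 0 ζ ∂μ ≠ ⊤) (l : ℝ≥0∞) :
    l * μ {ζ | ∃ n : ℕ, n * l < rewardSum r p (fun x => g x ζ) n 0} ≤ ∫⁻ ζ, g 0 ζ ∂μ := by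
  have hsub : {ζ | ∃ n : ℕ, n * l < rewardSum r p (fun x => g x ζ) n 0} ⊆
      ⋃ n, {ζ | 0 < reflectedRewardSum r p l (fun x => g x ζ) n 0} := by
    rintro ζ ⟨n, hn⟩
    refine mem_iUnion.mpr ⟨n, ?_⟩
    have hle := rewardSum_le_reflectedRewardSum_add r hp1 l (fun x => g x ζ) n 0
    refine (pos_iff_ne_zero (α := ℝ≥0∞)).mpr fun h => ?_
    rw [h, zero_add] at hle
    exact hle.not_gt hn
  have hmono : Monotone fun n => {ζ | 0 < reflectedRewardSum r p l (fun x => g x ζ) n 0} :=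
    fun _ _ hab _ hζ => hζ.trans_le (monotone_reflectedRewardSum r p l _ hab 0)
  refine (mul_le_mul_right (measure_mono hsub) l).trans ?_
  rw [hmono.measure_iUnion, ENNReal.mul_iSup]
  exact iSup_le fun n => mul_measure_reflectedRewardSum_pos_le hr hp hr1 hp1 hg hst hfin l n

lemma identDistrib_comp_add_right {E : Type*} [MeasurableSpace E] {w : X → Ω → E}
    (hi : iIndepFun w μ) (hid : ∀ x, IdentDistrib (w x) (w 0) μ μ) (a : X) :
    IdentDistrib (fun ζ x => w (x + a) ζ) (fun ζ x => w x ζ) μ μ :=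
  IdentDistrib.pi (fun x => (hid (x + a)).trans (hid x).symm)
    (hi.precomp (add_left_injective a)) hi

end Kernel

/-! ### Occupation times and the unbounded part of the scenery -/

/-- Expected time spent at `y` up to time `t` by the continuous-time walk on `ℤ^d` started
at `x`. -/
noncomputable def occupationKernel (d : ℕ) (t : ℝ) (x y : Fin d → ℤ) : ℝ≥0∞ :=
  ∫⁻ u in Ioc 0 t, heatKernelENN d u x y

section OccupationKernel

variable {d : ℕ}

lemma measurable_heatKernelENN (x y : Fin d → ℤ) : Measurable fun u => heatKernelENN d u x y := by
  simp_rw [heatKernelENN, heatKernel_eq_prod]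
  exact (Finset.measurable_fun_prod _ fun i _ =>
    (continuous_lineKernel (x i - y i)).measurable).ennreal_ofReal

lemma occupationKernel_add_right (t : ℝ) (x y c : Fin d → ℤ) :
    occupationKernel d t (x + c) (y + c) = occupationKernel d t x y := by
  simp_rw [occupationKernel, heatKernelENN_add_right]

lemma occupationKernel_mono (x y : Fin d → ℤ) :
    Monotone fun t => occupationKernel d t x y :=
  fun _ _ h => lintegral_mono_set (Ioc_subset_Ioc_right h)

lemma tsum_occupationKernel (t : ℝ) (x : Fin d → ℤ) :
    ∑' y, occupationKernel d t x y = ENNReal.ofReal t := by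
  simp_rw [occupationKernel]
  rw [← lintegral_tsum fun y => (measurable_heatKernelENN x y).aemeasurable,
    setLIntegral_congr_fun measurableSet_Ioc (g := fun _ => 1)
      fun u hu => tsum_heatKernelENN hu.1.le x]
  simp

variable {Ω : Type*} [MeasurableSpace Ω] {P : (Fin (d + 1) → ℤ) → Measure Ω}
  {S : ℝ → Ω → (Fin (d + 1) → ℤ)}

lemma IsCTSRW.occupationKernel_add (hS : IsCTSRW (d + 1) P S) {s t : ℝ} (hs : 0 ≤ s) (ht : 0 ≤ t)
    (x y : Fin d → ℤ) :
    occupationKernel d (s + t) x y =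
      occupationKernel d s x y + ∑' a, heatKernelENN d s x a * occupationKernel d t a y := by
  have hshift : ∑' a, heatKernelENN d s x a * occupationKernel d t a y =
      ∫⁻ u in Ioc s (s + t), heatKernelENN d u x y := by
    simp_rw [occupationKernel, ← lintegral_const_mul _ (measurable_heatKernelENN _ y)]
    rw [← lintegral_tsum fun a => ((measurable_heatKernelENN a y).const_mul _).aemeasurable,
      setLIntegral_congr_fun measurableSet_Ioc
        fun u hu => hS.tsum_heatKernelENN_mul hs hu.1.le x y,
      ← (measurePreserving_add_left volume s).setLIntegral_comp_preimage
        measurableSet_Ioc (measurable_heatKernelENN x y)]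
    simp
  rw [hshift, occupationKernel, occupationKernel,
    ← lintegral_union measurableSet_Ioc (Ioc_disjoint_Ioc_of_le le_rfl),
    Ioc_union_Ioc_eq_Ioc hs (le_add_of_nonneg_right ht)]

lemma IsCTSRW.rewardSum_occupationKernel (hS : IsCTSRW (d + 1) P S) (g : (Fin d → ℤ) → ℝ≥0∞)
    (n : ℕ) (x : Fin d → ℤ) :
    rewardSum (occupationKernel d 1) (heatKernelENN d 1) g n x =
      ∑' y, occupationKernel d n x y * g y := by
  induction n generalizing x with
  | zero => simp [rewardSum, occupationKernel]
  | succ n ih =>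
    have hsucc (y : Fin d → ℤ) : occupationKernel d (n + 1 : ℕ) x y * g y =
        occupationKernel d 1 x y * g y +
          ∑' a, heatKernelENN d 1 x a * (occupationKernel d n a y * g y) := by
      rw [Nat.cast_succ, add_comm, hS.occupationKernel_add zero_le_one n.cast_nonneg, add_mul,
        ← ENNReal.tsum_mul_right]
      simp_rw [mul_assoc]
    simp_rw [rewardSum, kernelApply, ih, hsucc, ← ENNReal.tsum_mul_left]
    rw [ENNReal.tsum_add, ENNReal.tsum_comm]

lemma IsCTSRW.measurable_comp_layerPath_swap (hS : IsCTSRW (d + 1) P S)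
    (g : (Fin d → ℤ) → ℝ≥0∞) : Measurable fun p : Ω × ℝ => g (layerPath S p.2 p.1) :=
  ((measurable_of_countable g).comp hS.measurable_layerPath_uncurry).comp measurable_swap

lemma IsCTSRW.lintegral_lintegral_comp_layerPath (hS : IsCTSRW (d + 1) P S)
    (g : (Fin d → ℤ) → ℝ≥0∞) (t : ℝ) :
    ∫⁻ ω, (∫⁻ u in Ioc 0 t, g (layerPath S u ω)) ∂P 0 = ∑' x, occupationKernel d t 0 x * g x := by
  have := hS.prob 0
  have hlaw (u : ℝ) (hu : 0 ≤ u) :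
      ∫⁻ ω, g (layerPath S u ω) ∂P 0 = ∑' x, heatKernelENN d u 0 x * g x := by
    rw [lintegral_comp_eq_tsum (hS.measurable_layerPath u)]
    refine tsum_congr fun x => ?_
    rw [← hS.measure_layerPath_eq hu, mul_comm]
    rfl
  rw [lintegral_lintegral_swap (hS.measurable_comp_layerPath_swap g).aemeasurable,
    setLIntegral_congr_fun measurableSet_Ioc fun u hu => hlaw u hu.1.le,
    lintegral_tsum fun x => ((measurable_heatKernelENN 0 x).mul_const _).aemeasurable]
  simp_rw [lintegral_mul_const _ (measurable_heatKernelENN _ _)]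
  rfl

/- One of `u` and `t - u` is at least `t / 2`; the on-diagonal bound is applied to that factor. -/
lemma heatKernelENN_mul_sub_le {u t : ℝ} (hu : 0 ≤ u) (hut : u ≤ t) (x : Fin d → ℤ) :
    heatKernelENN d u 0 x * heatKernelENN d (t - u) x 0 ≤
      ENNReal.ofReal (lineKernel (t / 2) 0 ^ d) *
        (heatKernelENN d u 0 x + heatKernelENN d (t - u) 0 x) := by
  have hdiag {s : ℝ} (hs : t / 2 ≤ s) (x y : Fin d → ℤ) :
      heatKernelENN d s x y ≤ ENNReal.ofReal (lineKernel (t / 2) 0 ^ d) := by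
    have hs0 : 0 ≤ s := by linarith
    refine (heatKernelENN_le_self hs0 x y).trans (ENNReal.ofReal_le_ofReal ?_)
    exact pow_le_pow_left₀ (lineKernel_nonneg hs0 0)
      (antitone_lineKernel_zero_displacement hs) d
  rw [heatKernelENN_comm x 0, mul_add]
  rcases le_total (t / 2) u with h | h
  · exact le_add_left (mul_le_mul_left (hdiag h 0 x) _)
  · rw [mul_comm]
    exact le_add_right (mul_le_mul_left (hdiag (by linarith) 0 x) _)

lemma IsCTSRW.setLIntegral_lintegral_comp_layerPath_le (hS : IsCTSRW (d + 1) P S)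
    (g : (Fin d → ℤ) → ℝ≥0∞) (t : ℝ) :
    ∫⁻ ω in {ω | layerPath S t ω = 0}, (∫⁻ u in Ioc 0 t, g (layerPath S u ω)) ∂P 0 ≤
      2 * ENNReal.ofReal (lineKernel (t / 2) 0 ^ d) * ∑' x, occupationKernel d t 0 x * g x := by
  have := hS.prob 0
  set c := ENNReal.ofReal (lineKernel (t / 2) 0 ^ d)
  have hbridge (u : ℝ) (hu : 0 ≤ u) (hut : u ≤ t) :
      ∫⁻ ω in {ω | layerPath S t ω = 0}, g (layerPath S u ω) ∂P 0 ≤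
        ∑' x, c * (heatKernelENN d u 0 x + heatKernelENN d (t - u) 0 x) * g x := by
    rw [lintegral_comp_eq_tsum (hS.measurable_layerPath u)]
    refine ENNReal.tsum_le_tsum fun x => ?_
    rw [Measure.restrict_apply (hS.measurable_layerPath u (measurableSet_singleton x)), mul_comm]
    refine mul_le_mul_left (le_of_eq_of_le ?_ (heatKernelENN_mul_sub_le hu hut x)) _
    rw [← hS.measure_layerPath_pair_eq hu (sub_nonneg.mpr hut), add_sub_cancel]
    rfl
  have hrev (x : Fin d → ℤ) :
      ∫⁻ u in Ioc 0 t, heatKernelENN d (t - u) 0 x = occupationKernel d t 0 x := by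
    rw [occupationKernel, ← setLIntegral_congr Ioo_ae_eq_Ioc, ← setLIntegral_congr Ioo_ae_eq_Ioc,
      ← (Measure.measurePreserving_sub_left volume t).setLIntegral_comp_preimage
        measurableSet_Ioo (measurable_heatKernelENN 0 x)]
    simp
  have hmeas (x : Fin d → ℤ) : Measurable fun u => heatKernelENN d (t - u) 0 x :=
    (measurable_heatKernelENN 0 x).comp (measurable_const.sub measurable_id)
  have hsum (x : Fin d → ℤ) := (measurable_heatKernelENN 0 x).fun_add (hmeas x)
  rw [lintegral_lintegral_swap (hS.measurable_comp_layerPath_swap g).aemeasurable]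
  refine (setLIntegral_mono' measurableSet_Ioc fun u hu => hbridge u hu.1.le hu.2).trans_eq ?_
  rw [lintegral_tsum fun x => (((hsum x).const_mul c).mul_const _).aemeasurable,
    ← ENNReal.tsum_mul_left]
  refine tsum_congr fun x => ?_
  rw [lintegral_mul_const _ ((hsum x).const_mul c), lintegral_const_mul c (hsum x),
    lintegral_add_left (measurable_heatKernelENN 0 x), hrev, ← occupationKernel, ← two_mul]
  ring

end OccupationKernel

section Excess

lemma tendsto_lintegral_ofReal_sub_natCast {Ω : Type*} [MeasurableSpace Ω] {μ : Measure Ω}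
    {f : Ω → ℝ} (hf : Measurable f) (hint : Integrable f μ) :
    Tendsto (fun K : ℕ => ∫⁻ ω, ENNReal.ofReal (f ω - K) ∂μ) atTop (𝓝 0) := by
  rw [← lintegral_zero (μ := μ)]
  refine tendsto_lintegral_of_dominated_convergence (fun ω => ENNReal.ofReal (f ω))
    (fun K => (hf.sub_const _).ennreal_ofReal)
    (fun K => ae_of_all _ fun ω => ENNReal.ofReal_le_ofReal (sub_le_self _ K.cast_nonneg))
    hint.lintegral_lt_top.ne (ae_of_all _ fun ω => tendsto_const_nhds.congr' ?_)
  filter_upwards [eventually_ge_atTop ⌈f ω⌉₊] with K hK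
  exact (ENNReal.ofReal_eq_zero.mpr (sub_nonpos.mpr (Nat.le_of_ceil_le hK))).symm

variable {d : ℕ} {Ω : Type*} [MeasurableSpace Ω] {P : (Fin (d + 1) → ℤ) → Measure Ω}
  {S : ℝ → Ω → (Fin (d + 1) → ℤ)} {Ωz : Type*} [MeasurableSpace Ωz] {μ : Measure Ωz}
  {z : (Fin d → ℤ) → Ωz → ℝ}

theorem IsCTSRW.ae_exists_tsum_occupationKernel_excess_le [IsProbabilityMeasure μ]
    (hS : IsCTSRW (d + 1) P S) (hz : ∀ x, Measurable (z x)) (hi : iIndepFun z μ)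
    (hid : ∀ x, IdentDistrib (z x) (z 0) μ μ) (hint : Integrable (z 0) μ) {δ : ℝ≥0∞}
    (hδ : δ ≠ 0) :
    ∀ᵐ ζ ∂μ, ∃ K : ℕ, ∀ n : ℕ,
      ∑' x, occupationKernel d n 0 x * ENNReal.ofReal (z x ζ - K) ≤ n * δ := by
  set B : ℕ → Set Ωz := fun K => {ζ | ∃ n : ℕ, n * δ < rewardSum (occupationKernel d 1)
    (heatKernelENN d 1) (fun x => ENNReal.ofReal (z x ζ - K)) n 0}
  have hexcess (K : ℕ) : Measurable fun r : ℝ => ENNReal.ofReal (r - K) :=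
    (measurable_id.sub_const _).ennreal_ofReal
  have hmax (K : ℕ) : δ * μ (B K) ≤ ∫⁻ ζ, ENNReal.ofReal (z 0 ζ - K) ∂μ := by
    refine mul_measure_exists_lt_rewardSum_le (g := fun x ζ => ENNReal.ofReal (z x ζ - K))
      (occupationKernel_add_right 1) heatKernelENN_add_right
      (fun x => by rw [tsum_occupationKernel, ENNReal.ofReal_one])
      (tsum_heatKernelENN zero_le_one) (fun x => (hexcess K).comp (hz x))
      (identDistrib_comp_add_right (hi.comp _ fun _ => hexcess K)
        fun x => (hid x).comp (hexcess K)) ?_ δ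
    exact ne_top_of_le_ne_top hint.lintegral_lt_top.ne
      (lintegral_mono fun ζ => ENNReal.ofReal_le_ofReal (sub_le_self _ K.cast_nonneg))
  have hzero : δ * μ (⋂ K, B K) = 0 := by
    refine nonpos_iff_eq_zero.mp (ge_of_tendsto'
      (tendsto_lintegral_ofReal_sub_natCast (hz 0) hint) fun K => le_trans ?_ (hmax K))
    exact mul_le_mul_right (measure_mono (iInter_subset B K)) δ
  filter_upwards [measure_eq_zero_iff_ae_notMem.mp ((mul_eq_zero.mp hzero).resolve_left hδ)]
    with ζ hζ
  obtain ⟨K, hK⟩ : ∃ K, ζ ∉ B K := by simpa only [mem_iInter, not_forall] using hζ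
  refine ⟨K, fun n => not_lt.mp fun hlt => hK ⟨n, ?_⟩⟩
  rwa [hS.rewardSum_occupationKernel]

end Excess

/-! ### Typical environments -/

section RealTime

variable {d : ℕ} {Ω : Type*} [MeasurableSpace Ω] {P : (Fin (d + 1) → ℤ) → Measure Ω}
  {S : ℝ → Ω → (Fin (d + 1) → ℤ)} {w : (Fin d → ℤ) → ℝ} {K : ℝ}

lemma IsCTSRW.integrableOn_comp_layerPath_of_bounded (hS : IsCTSRW (d + 1) P S)
    (hK : ∀ x, |w x| ≤ K) (ω : Ω) (a b : ℝ) :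
    IntegrableOn (fun u => w (layerPath S u ω)) (Ioc a b) := by
  simpa using hS.integrableOn_comp_layerPath hK ω 0 a b

lemma IsCTSRW.additiveFunctional_sub_const (hS : IsCTSRW (d + 1) P S) (hK : ∀ x, |w x| ≤ K)
    (c : ℝ) {t : ℝ} (ht : 0 ≤ t) (ω : Ω) :
    additiveFunctional S (fun x => w x - c) t ω = additiveFunctional S w t ω - c * t := by
  rw [additiveFunctional, integral_sub (hS.integrableOn_comp_layerPath_of_bounded hK ω 0 t)
    (integrable_const c)]
  simp [additiveFunctional, ht, mul_comm]

lemma IsCTSRW.abs_additiveFunctional_sub_natFloor_le (hS : IsCTSRW (d + 1) P S)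
    (hK : ∀ x, |w x| ≤ K) {t : ℝ} (ht : 0 ≤ t) (ω : Ω) :
    |additiveFunctional S w t ω - additiveFunctional S w ⌊t⌋₊ ω| ≤ K := by
  have hK0 : 0 ≤ K := (abs_nonneg _).trans (hK 0)
  have hfloor : (⌊t⌋₊ : ℝ) ≤ t := Nat.floor_le ht
  have hint (a b : ℝ) := hS.integrableOn_comp_layerPath_of_bounded hK ω a b
  have hsplit : additiveFunctional S w t ω - additiveFunctional S w ⌊t⌋₊ ω =
      ∫ u in Ioc (⌊t⌋₊ : ℝ) t, w (layerPath S u ω) := by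
    rw [additiveFunctional, ← Ioc_union_Ioc_eq_Ioc (Nat.cast_nonneg ⌊t⌋₊) hfloor,
      setIntegral_union (Ioc_disjoint_Ioc_of_le le_rfl) measurableSet_Ioc (hint _ _) (hint _ _),
      additiveFunctional, add_sub_cancel_left]
  calc |additiveFunctional S w t ω - additiveFunctional S w ⌊t⌋₊ ω|
      ≤ K * volume.real (Ioc (⌊t⌋₊ : ℝ) t) := by
        rw [hsplit, ← Real.norm_eq_abs]
        exact norm_setIntegral_le_of_norm_le_const measure_Ioc_lt_top fun u _ => hK _
    _ ≤ K * 1 := by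
        rw [Real.volume_real_Ioc_of_le hfloor]
        gcongr
        linarith [Nat.lt_floor_add_one t]
    _ = K := mul_one K

lemma IsCTSRW.tendsto_pow_mul_measureReal_le_abs_additiveFunctional (hS : IsCTSRW (d + 1) P S)
    (hK : ∀ x, |w x| ≤ K) {ε : ℝ} (hε : 0 < ε) {D : ℕ}
    (h : Tendsto (fun n : ℕ => ENNReal.ofReal ((n : ℝ) ^ D) *
      P 0 {ω | ε / 2 * n ≤ |additiveFunctional S w n ω|}) atTop (𝓝 0)) :
    Tendsto (fun t : ℝ => t ^ D * (P 0).real {ω | ε * t ≤ |additiveFunctional S w t ω|})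
      atTop (𝓝 0) := by
  have := hS.prob 0
  have hfloor : Tendsto (fun t : ℝ => 2 ^ D * ((⌊t⌋₊ : ℝ) ^ D *
      (P 0).real {ω | ε / 2 * ⌊t⌋₊ ≤ |additiveFunctional S w ⌊t⌋₊ ω|})) atTop (𝓝 0) := by
    have hreal := ((ENNReal.tendsto_toReal ENNReal.zero_ne_top).comp h).comp
      (tendsto_nat_floor_atTop (α := ℝ))
    simpa [Function.comp_def, measureReal_def] using hreal.const_mul (2 ^ D)
  refine squeeze_zero' ((eventually_ge_atTop 0).mono fun t ht => by positivity) ?_ hfloor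
  filter_upwards [eventually_ge_atTop 1, eventually_ge_atTop (2 * K / ε)] with t ht htK
  have hle : (⌊t⌋₊ : ℝ) ≤ t := Nat.floor_le (zero_le_one.trans ht)
  have hlt : t < ⌊t⌋₊ + 1 := Nat.lt_floor_add_one t
  have hone : (1 : ℝ) ≤ ⌊t⌋₊ := by exact_mod_cast Nat.le_floor (by simpa using ht)
  have hKt : 2 * K ≤ ε * t := by rwa [div_le_iff₀' hε] at htK
  rw [← mul_assoc, ← mul_pow]
  refine mul_le_mul (pow_le_pow_left₀ (by linarith) (by linarith) D)
    (measureReal_mono fun ω hω => ?_) measureReal_nonneg (by positivity)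
  have hω : ε * t ≤ |additiveFunctional S w t ω| := hω
  have hmul : ε * ⌊t⌋₊ ≤ ε * t := by gcongr
  have hdiff := hS.abs_additiveFunctional_sub_natFloor_le hK (zero_le_one.trans ht) ω
  have hsub := abs_sub_abs_le_abs_sub (additiveFunctional S w t ω)
    (additiveFunctional S w ⌊t⌋₊ ω)
  change ε / 2 * ⌊t⌋₊ ≤ |additiveFunctional S w ⌊t⌋₊ ω|
  linarith

end RealTime

section Typical

/-- The quenched properties of the layer conductances `v` from which the asymptotics of the
return probability follow, `m` being the mean conductance: the clock of the truncated conductances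
`min v K` concentrates, and the conductance in excess of `K` is negligible along the walk. -/
structure IsTypicalEnvironment {d : ℕ} {Ω : Type*} [MeasurableSpace Ω]
    (P : (Fin (d + 1) → ℤ) → Measure Ω) (S : ℝ → Ω → (Fin (d + 1) → ℤ)) (m : ℝ)
    (v : (Fin d → ℤ) → ℝ) : Prop where
  nonneg : ∀ x, 0 ≤ v x
  lower : ∀ a < m, ∃ K : ℕ, Tendsto (fun t : ℝ => t ^ (d + 1) *
    (P 0).real {ω | additiveFunctional S (fun x => min (v x) K) t ω < a * t}) atTop (𝓝 0)
  upper : ∀ a > m, ∀ K : ℕ, Tendsto (fun t : ℝ => t ^ (d + 1) *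
    (P 0).real {ω | a * t < additiveFunctional S (fun x => min (v x) K) t ω}) atTop (𝓝 0)
  excess : ∀ ε : ℝ, 0 < ε → ∃ K : ℕ, ∀ n : ℕ,
    ∑' x, occupationKernel d n 0 x * ENNReal.ofReal (v x - K) ≤ n * ENNReal.ofReal ε

section Truncation

variable {Ω : Type*} [MeasurableSpace Ω] {μ : Measure Ω} {f : Ω → ℝ}

lemma tendsto_integral_min_natCast (hf : ∀ ω, 0 ≤ f ω) (hint : Integrable f μ) :
    Tendsto (fun K : ℕ => ∫ ω, min (f ω) K ∂μ) atTop (𝓝 (∫ ω, f ω ∂μ)) := by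
  refine tendsto_integral_of_dominated_convergence f
    (fun K => hint.aestronglyMeasurable.inf aestronglyMeasurable_const) hint
    (fun K => ae_of_all _ fun ω => ?_) (ae_of_all _ fun ω => tendsto_const_nhds.congr' ?_)
  · rw [Real.norm_of_nonneg (le_min (hf ω) K.cast_nonneg)]
    exact min_le_left _ _
  · filter_upwards [eventually_ge_atTop ⌈f ω⌉₊] with K hK
    exact (min_eq_left (Nat.le_of_ceil_le hK)).symm

lemma integral_min_natCast_le (hf : ∀ ω, 0 ≤ f ω) (hint : Integrable f μ) (K : ℕ) :
    ∫ ω, min (f ω) K ∂μ ≤ ∫ ω, f ω ∂μ :=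
  integral_mono_of_nonneg (ae_of_all _ fun ω => le_min (hf ω) K.cast_nonneg) hint
    (ae_of_all _ fun _ => min_le_left _ _)

end Truncation

variable {d : ℕ} {Ω : Type*} [MeasurableSpace Ω] {P : (Fin (d + 1) → ℤ) → Measure Ω}
  {S : ℝ → Ω → (Fin (d + 1) → ℤ)} {Ωz : Type*} [MeasurableSpace Ωz] {μ : Measure Ωz}
  [IsProbabilityMeasure μ] {z : (Fin d → ℤ) → Ωz → ℝ}

lemma abs_min_natCast_le {r : ℝ} (hr : 0 ≤ r) (K : ℕ) : |min r K| ≤ K := by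
  rw [abs_of_nonneg (le_min hr K.cast_nonneg)]
  exact min_le_right _ _

lemma IsCTSRW.ae_tendsto_measureReal_le_abs_additiveFunctional_min_sub (hd : 1 ≤ d)
    (hS : IsCTSRW (d + 1) P S) (hz : ∀ x, Measurable (z x)) (hnonneg : ∀ x ζ, 0 ≤ z x ζ)
    (hi : iIndepFun z μ) (hid : ∀ x, IdentDistrib (z x) (z 0) μ μ) (K : ℕ) {ε : ℝ} (hε : 0 < ε)
    (D : ℕ) :
    ∀ᵐ ζ ∂μ, Tendsto (fun t : ℝ => t ^ D * (P 0).real {ω | ε * t ≤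
      |additiveFunctional S (fun x => min (z x ζ) K) t ω - (∫ ζ', min (z 0 ζ') K ∂μ) * t|})
      atTop (𝓝 0) := by
  set mK : ℝ := ∫ ζ', min (z 0 ζ') K ∂μ
  have hmin : Measurable fun r : ℝ => min r K := measurable_id.min measurable_const
  have htrunc (x : Fin d → ℤ) (ζ : Ωz) := abs_min_natCast_le (hnonneg x ζ) K
  have hbdd (x : Fin d → ℤ) (ζ : Ωz) : |min (z x ζ) K - mK| ≤ K + |mK| :=
    (abs_sub _ _).trans (add_le_add_left (htrunc x ζ) _)
  have hmean (x : Fin d → ℤ) : ∫ ζ, (min (z x ζ) K - mK) ∂μ = 0 := by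
    have hint : Integrable (fun ζ => min (z x ζ) K) μ :=
      .of_bound (hmin.comp (hz x)).aestronglyMeasurable K (ae_of_all _ (htrunc x))
    rw [integral_sub hint (integrable_const mK), integral_const, probReal_univ, one_smul,
      sub_eq_zero]
    exact ((hid x).comp hmin).integral_eq
  filter_upwards [hS.ae_tendsto_measure_le_abs_additiveFunctional (μ := μ) hd
    (w := fun x ζ => min (z x ζ) K - mK) (fun x => (hmin.comp (hz x)).sub_const mK)
    (hi.comp _ fun _ => hmin.sub_const mK) hbdd hmean (half_pos hε) D] with ζ hζ
  refine (hS.tendsto_pow_mul_measureReal_le_abs_additiveFunctional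
    (fun x => hbdd x ζ) hε hζ).congr' ?_
  filter_upwards [eventually_ge_atTop 0] with t ht
  simp_rw [hS.additiveFunctional_sub_const (fun x => htrunc x ζ) mK ht]

lemma IsCTSRW.ae_forall_tendsto_measureReal_le_abs_additiveFunctional_min_sub (hd : 1 ≤ d)
    (hS : IsCTSRW (d + 1) P S) (hz : ∀ x, Measurable (z x)) (hnonneg : ∀ x ζ, 0 ≤ z x ζ)
    (hi : iIndepFun z μ) (hid : ∀ x, IdentDistrib (z x) (z 0) μ μ) (D : ℕ) :
    ∀ᵐ ζ ∂μ, ∀ (K : ℕ) (ε : ℝ), 0 < ε → Tendsto (fun t : ℝ => t ^ D * (P 0).real {ω | ε * t ≤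
      |additiveFunctional S (fun x => min (z x ζ) K) t ω - (∫ ζ', min (z 0 ζ') K ∂μ) * t|})
      atTop (𝓝 0) := by
  have := hS.prob 0
  have hcount (K j : ℕ) := hS.ae_tendsto_measureReal_le_abs_additiveFunctional_min_sub (μ := μ) hd
    hz hnonneg hi hid K (Nat.one_div_pos_of_nat (α := ℝ) (n := j)) D
  filter_upwards [ae_all_iff.mpr fun K => ae_all_iff.mpr (hcount K)] with ζ hζ K ε hε
  obtain ⟨j, hj⟩ := exists_nat_one_div_lt hε
  refine squeeze_zero' ((eventually_ge_atTop 0).mono fun t ht => by positivity) ?_ (hζ K j)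
  filter_upwards [eventually_ge_atTop 0] with t ht
  refine mul_le_mul_of_nonneg_left (measureReal_mono fun ω hω => ?_) (by positivity)
  exact (mul_le_mul_of_nonneg_right hj.le ht).trans hω

theorem IsCTSRW.ae_isTypicalEnvironment (hd : 1 ≤ d) (hS : IsCTSRW (d + 1) P S)
    (hz : ∀ x, Measurable (z x)) (hnonneg : ∀ x ζ, 0 ≤ z x ζ) (hi : iIndepFun z μ)
    (hid : ∀ x, IdentDistrib (z x) (z 0) μ μ) (hint : Integrable (z 0) μ) :
    ∀ᵐ ζ ∂μ, IsTypicalEnvironment P S (∫ ζ', z 0 ζ' ∂μ) fun x => z x ζ := by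
  have := hS.prob 0
  have hexcess (j : ℕ) := hS.ae_exists_tsum_occupationKernel_excess_le hz hi hid hint
    (δ := ENNReal.ofReal (1 / ((j : ℝ) + 1)))
    (ENNReal.ofReal_pos.mpr Nat.one_div_pos_of_nat).ne'
  filter_upwards [hS.ae_forall_tendsto_measureReal_le_abs_additiveFunctional_min_sub hd hz hnonneg
    hi hid (d + 1), ae_all_iff.mpr hexcess] with ζ hconc hexc
  refine ⟨fun x => hnonneg x ζ, fun a ha => ?_, fun a ha K => ?_, fun ε hε => ?_⟩
  · obtain ⟨K, hK⟩ :=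
      ((tendsto_integral_min_natCast (hnonneg 0) hint).eventually_const_lt ha).exists
    refine ⟨K, squeeze_zero' ((eventually_ge_atTop 0).mono fun t ht => by positivity) ?_
      (hconc K _ (sub_pos.mpr hK))⟩
    filter_upwards [eventually_ge_atTop 0] with t ht
    refine mul_le_mul_of_nonneg_left (measureReal_mono fun ω hω => ?_) (by positivity)
    rw [mem_ofPred_eq] at hω ⊢
    exact le_trans (by linarith) (neg_le_abs _)
  · have hK := (integral_min_natCast_le (hnonneg 0) hint K).trans_lt ha
    refine squeeze_zero' ((eventually_ge_atTop 0).mono fun t ht => by positivity) ?_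
      (hconc K _ (sub_pos.mpr hK))
    filter_upwards [eventually_ge_atTop 0] with t ht
    refine mul_le_mul_of_nonneg_left (measureReal_mono fun ω hω => ?_) (by positivity)
    rw [mem_ofPred_eq] at hω ⊢
    exact le_trans (by linarith) (le_abs_self _)
  · obtain ⟨j, hj⟩ := exists_nat_one_div_lt hε
    obtain ⟨K, hK⟩ := hexc j
    exact ⟨K, fun n => (hK n).trans (mul_le_mul_right (ENNReal.ofReal_le_ofReal hj.le) _)⟩

end Typical

/-! ### Tail bounds for the clock in a typical environment -/

section ClockTails

variable {d : ℕ} {Ω : Type*} [MeasurableSpace Ω] {P : (Fin (d + 1) → ℤ) → Measure Ω}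
  {S : ℝ → Ω → (Fin (d + 1) → ℤ)} {v : (Fin d → ℤ) → ℝ} {m : ℝ}

lemma tendsto_sqrt_pow_mul_of_tendsto_pow_mul {f : ℝ → ℝ} (hf : ∀ t, 0 ≤ f t) {j k : ℕ}
    (hjk : j ≤ k) (h : Tendsto (fun t => t ^ k * f t) atTop (𝓝 0)) :
    Tendsto (fun t => √t ^ j * f t) atTop (𝓝 0) := by
  refine squeeze_zero' (Eventually.of_forall fun t => mul_nonneg (by positivity) (hf t)) ?_ h
  filter_upwards [eventually_ge_atTop 1] with t ht
  have hsqrt : √t ≤ t := Real.sqrt_le_iff.mpr ⟨by linarith, by nlinarith⟩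
  refine mul_le_mul_of_nonneg_right ?_ (hf t)
  exact (pow_le_pow_left₀ (Real.sqrt_nonneg t) hsqrt j).trans (pow_le_pow_right₀ ht hjk)

lemma IsCTSRW.measurable_lintegral_comp_layerPath (hS : IsCTSRW (d + 1) P S)
    (g : (Fin d → ℤ) → ℝ≥0∞) (t : ℝ) :
    Measurable fun ω => ∫⁻ u in Ioc 0 t, g (layerPath S u ω) :=
  (hS.measurable_comp_layerPath_swap g).lintegral_prod_right'

lemma IsCTSRW.aestronglyMeasurable_comp_layerPath (hS : IsCTSRW (d + 1) P S)
    (w : (Fin d → ℤ) → ℝ) (ω : Ω) (ν : Measure ℝ) :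
    AEStronglyMeasurable (fun u => w (layerPath S u ω)) ν :=
  ((measurable_of_countable w).comp
    (hS.measurable_layerPath_uncurry.comp measurable_prodMk_right)).aestronglyMeasurable

lemma IsTypicalEnvironment.ae_integrableOn (hv : IsTypicalEnvironment P S m v)
    (hS : IsCTSRW (d + 1) P S) :
    ∀ᵐ ω ∂P 0, ∀ t : ℝ, IntegrableOn (fun u => v (layerPath S u ω)) (Ioc 0 t) := by
  obtain ⟨K, hK⟩ := hv.excess 1 one_pos
  have hfin (n : ℕ) : ∀ᵐ ω ∂P 0,
      ∫⁻ u in Ioc 0 (n : ℝ), ENNReal.ofReal (v (layerPath S u ω) - K) < ⊤ := by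
    refine ae_lt_top (hS.measurable_lintegral_comp_layerPath (fun x => .ofReal (v x - K)) n) ?_
    rw [hS.lintegral_lintegral_comp_layerPath fun x => ENNReal.ofReal (v x - K)]
    exact ne_top_of_le_ne_top (by finiteness) (hK n)
  filter_upwards [ae_all_iff.mpr hfin] with ω hω t
  refine IntegrableOn.mono_set (t := Ioc 0 (⌈t⌉₊ : ℝ)) ?_ (Ioc_subset_Ioc_right (Nat.le_ceil t))
  refine ⟨hS.aestronglyMeasurable_comp_layerPath v ω _, ?_⟩
  rw [hasFiniteIntegral_iff_ofReal (ae_of_all _ fun u => hv.nonneg _)]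
  calc ∫⁻ u in Ioc 0 (⌈t⌉₊ : ℝ), ENNReal.ofReal (v (layerPath S u ω))
      ≤ ∫⁻ u in Ioc 0 (⌈t⌉₊ : ℝ),
          (ENNReal.ofReal (v (layerPath S u ω) - K) + ENNReal.ofReal K) := by
        refine lintegral_mono fun u => le_trans (by rw [sub_add_cancel]) ENNReal.ofReal_add_le
    _ < ⊤ := by
        rw [lintegral_add_right _ measurable_const, setLIntegral_const]
        exact ENNReal.add_lt_top.mpr
          ⟨hω _, ENNReal.mul_lt_top ENNReal.ofReal_lt_top measure_Ioc_lt_top⟩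

lemma IsCTSRW.additiveFunctional_min_le (hS : IsCTSRW (d + 1) P S) (hv : ∀ x, 0 ≤ v x) {t : ℝ}
    {ω : Ω} (hint : IntegrableOn (fun u => v (layerPath S u ω)) (Ioc 0 t)) (K : ℕ) :
    additiveFunctional S (fun x => min (v x) K) t ω ≤ additiveFunctional S v t ω :=
  integral_mono (hS.integrableOn_comp_layerPath_of_bounded
    (fun x => abs_min_natCast_le (hv x) K) ω 0 t) hint fun _ => min_le_left _ _

lemma IsCTSRW.additiveFunctional_eq_min_add_excess (hS : IsCTSRW (d + 1) P S)
    (hv : ∀ x, 0 ≤ v x) {t : ℝ} {ω : Ω}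
    (hint : IntegrableOn (fun u => v (layerPath S u ω)) (Ioc 0 t)) (K : ℕ) :
    additiveFunctional S v t ω = additiveFunctional S (fun x => min (v x) K) t ω +
      (∫⁻ u in Ioc 0 t, ENNReal.ofReal (v (layerPath S u ω) - K)).toReal := by
  have hmin := hS.integrableOn_comp_layerPath_of_bounded
    (fun x => abs_min_natCast_le (hv x) K) ω 0 t
  have hexcess (r : ℝ) : ENNReal.ofReal (r - K) = ENNReal.ofReal (r - min r K) := by
    rcases le_total r K with h | h
    · rw [min_eq_left h, sub_self, ENNReal.ofReal_zero,
        ENNReal.ofReal_of_nonpos (sub_nonpos.mpr h)]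
    · rw [min_eq_right h]
  simp_rw [hexcess]
  rw [← integral_eq_lintegral_of_nonneg_ae
    (ae_of_all _ fun u => sub_nonneg.mpr (min_le_left _ _)) (hint.sub hmin).1,
    integral_sub hint hmin]
  simp only [additiveFunctional, add_sub_cancel]

lemma IsTypicalEnvironment.tendsto_lower_tail (hv : IsTypicalEnvironment P S m v)
    (hS : IsCTSRW (d + 1) P S) {a : ℝ} (ha : a < m) :
    Tendsto (fun t : ℝ => √t ^ (d + 1) * (P 0).real {ω | additiveFunctional S v t ω < a * t})
      atTop (𝓝 0) := by
  have := hS.prob 0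
  obtain ⟨K, hK⟩ := hv.lower a ha
  refine squeeze_zero (fun t => by positivity) (fun t => ?_)
    (tendsto_sqrt_pow_mul_of_tendsto_pow_mul (fun t => measureReal_nonneg) le_rfl hK)
  refine mul_le_mul_of_nonneg_left ?_ (by positivity)
  refine ENNReal.toReal_mono (measure_ne_top _ _) (measure_mono_ae ?_)
  filter_upwards [hv.ae_integrableOn hS] with ω hω hlt
  exact (hS.additiveFunctional_min_le hv.nonneg (hω t) K).trans_lt hlt

lemma IsCTSRW.measureReal_return_inter_excess_le (hS : IsCTSRW (d + 1) P S) {ε : ℝ} (hε : 0 ≤ ε)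
    {K : ℕ} (hK : ∀ n : ℕ, ∑' x, occupationKernel d n 0 x * ENNReal.ofReal (v x - K) ≤
      n * ENNReal.ofReal ε) {b t : ℝ} (hb : 0 < b) (ht : 1 ≤ t) :
    (P 0).real ({ω | ENNReal.ofReal (b * t) ≤
        ∫⁻ u in Ioc 0 t, ENNReal.ofReal (v (layerPath S u ω) - K)} ∩ {ω | layerPath S t ω = 0}) ≤
      4 / b * ε * lineKernel (t / 2) 0 ^ d := by
  have hbt : 0 < b * t := mul_pos hb (by linarith)
  have hk : 0 ≤ lineKernel (t / 2) 0 := lineKernel_nonneg (by linarith) 0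
  have hmeas := hS.measurable_lintegral_comp_layerPath (fun x => ENNReal.ofReal (v x - K)) t
  set E := {ω | ENNReal.ofReal (b * t) ≤
    ∫⁻ u in Ioc 0 t, ENNReal.ofReal (v (layerPath S u ω) - K)}
  have hceil : (⌈t⌉₊ : ℝ≥0∞) ≤ ENNReal.ofReal (2 * t) := by
    rw [← ENNReal.ofReal_natCast]
    exact ENNReal.ofReal_le_ofReal (by linarith [Nat.ceil_lt_add_one (zero_le_one.trans ht)])
  have hmarkov : ENNReal.ofReal (b * t) * P 0 (E ∩ {ω | layerPath S t ω = 0}) ≤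
      ENNReal.ofReal (2 * lineKernel (t / 2) 0 ^ d * (2 * t * ε)) := by
    calc ENNReal.ofReal (b * t) * P 0 (E ∩ {ω | layerPath S t ω = 0})
        ≤ ∫⁻ ω in {ω | layerPath S t ω = 0},
            (∫⁻ u in Ioc 0 t, ENNReal.ofReal (v (layerPath S u ω) - K)) ∂P 0 := by
          rw [← Measure.restrict_apply (measurableSet_le measurable_const hmeas)]
          exact mul_meas_ge_le_lintegral hmeas _
      _ ≤ 2 * ENNReal.ofReal (lineKernel (t / 2) 0 ^ d) *
            ∑' x, occupationKernel d t 0 x * ENNReal.ofReal (v x - K) :=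
          hS.setLIntegral_lintegral_comp_layerPath_le (fun x => ENNReal.ofReal (v x - K)) t
      _ ≤ 2 * ENNReal.ofReal (lineKernel (t / 2) 0 ^ d) *
            ∑' x, occupationKernel d ⌈t⌉₊ 0 x * ENNReal.ofReal (v x - K) := by
          gcongr with x
          exact occupationKernel_mono 0 x (Nat.le_ceil t)
      _ ≤ 2 * ENNReal.ofReal (lineKernel (t / 2) 0 ^ d) *
            (ENNReal.ofReal (2 * t) * ENNReal.ofReal ε) := by
          gcongr
          exact (hK _).trans (mul_le_mul_left hceil _)
      _ = ENNReal.ofReal (2 * lineKernel (t / 2) 0 ^ d * (2 * t * ε)) := by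
          rw [ENNReal.ofReal_mul (p := 2 * lineKernel (t / 2) 0 ^ d) (by positivity),
            ENNReal.ofReal_mul (p := 2) (q := lineKernel (t / 2) 0 ^ d) zero_le_two,
            ENNReal.ofReal_mul (p := 2 * t) (by linarith), ENNReal.ofReal_ofNat]
  have hreal := ENNReal.toReal_mono ENNReal.ofReal_ne_top hmarkov
  rw [ENNReal.toReal_mul, ENNReal.toReal_ofReal hbt.le, ← measureReal_def,
    ENNReal.toReal_ofReal (by positivity)] at hreal
  refine le_of_mul_le_mul_left (hreal.trans_eq ?_) hbt
  field_simp
  ring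

lemma tendsto_sqrt_mul_lineKernel_const_mul {a : ℝ} (ha : 0 < a) :
    Tendsto (fun t : ℝ => √t * lineKernel (a * t) 0) atTop
      (𝓝 ((4 * π) ^ (-(1 / 2) : ℝ) * (√a)⁻¹)) := by
  refine ((tendsto_sqrt_mul_lineKernel.comp (tendsto_id.const_mul_atTop ha)).mul_const
    (√a)⁻¹).congr fun t => ?_
  have hsqrt : √a ≠ 0 := (Real.sqrt_pos.mpr ha).ne'
  rw [Function.comp_apply, id, Real.sqrt_mul ha.le]
  field_simp

lemma IsTypicalEnvironment.measureReal_return_inter_upper_tail_le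
    (hv : IsTypicalEnvironment P S m v) (hS : IsCTSRW (d + 1) P S) {ε : ℝ} (hε : 0 ≤ ε)
    {K : ℕ} (hK : ∀ n : ℕ, ∑' x, occupationKernel d n 0 x * ENNReal.ofReal (v x - K) ≤
      n * ENNReal.ofReal ε) {a b t : ℝ} (hba : b < a) (ht : 1 ≤ t) :
    (P 0).real {ω | layerPath S t ω = 0 ∧ a * t < additiveFunctional S v t ω} ≤
      (P 0).real {ω | b * t < additiveFunctional S (fun x => min (v x) K) t ω} +
        4 / (a - b) * ε * lineKernel (t / 2) 0 ^ d := by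
  have := hS.prob 0
  refine le_trans ?_ (add_le_add_right
    (hS.measureReal_return_inter_excess_le hε hK (sub_pos.mpr hba) ht) _)
  refine le_trans ?_ (measureReal_union_le _ _)
  refine ENNReal.toReal_mono (measure_ne_top _ _) (measure_mono_ae ?_)
  filter_upwards [hv.ae_integrableOn hS] with ω hω ⟨hY, hlt⟩
  rw [hS.additiveFunctional_eq_min_add_excess hv.nonneg (hω t) K] at hlt
  refine or_iff_not_imp_left.mpr fun hmin => ⟨ENNReal.ofReal_le_of_le_toReal ?_, hY⟩
  have hmin : additiveFunctional S (fun x => min (v x) K) t ω ≤ b * t := not_lt.mp hmin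
  linarith

lemma IsTypicalEnvironment.tendsto_return_inter_upper_tail (hv : IsTypicalEnvironment P S m v)
    (hS : IsCTSRW (d + 1) P S) {a : ℝ} (ha : m < a) :
    Tendsto (fun t : ℝ => √t ^ d *
      (P 0).real {ω | layerPath S t ω = 0 ∧ a * t < additiveFunctional S v t ω})
      atTop (𝓝 0) := by
  obtain ⟨b, hmb, hba⟩ := exists_between ha
  set C : ℝ := ((4 * π) ^ (-(1 / 2) : ℝ) * (√(1 / 2))⁻¹) ^ d
  refine tendsto_order.mpr ⟨fun y hy => Eventually.of_forall fun t =>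
    hy.trans_le (by positivity), fun y hy => ?_⟩
  obtain ⟨ε, hε, hεy⟩ := exists_pos_mul_lt hy (4 / (a - b) * C)
  obtain ⟨K, hK⟩ := hv.excess ε hε
  have hbound : Tendsto (fun t : ℝ =>
      √t ^ d * (P 0).real {ω | b * t < additiveFunctional S (fun x => min (v x) K) t ω} +
        4 / (a - b) * (√t * lineKernel (1 / 2 * t) 0) ^ d * ε) atTop
      (𝓝 (0 + 4 / (a - b) * C * ε)) :=
    (tendsto_sqrt_pow_mul_of_tendsto_pow_mul (fun t => measureReal_nonneg) d.le_succ
      (hv.upper b hmb K)).add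
      ((((tendsto_sqrt_mul_lineKernel_const_mul one_half_pos).pow d).const_mul _).mul_const ε)
  rw [zero_add] at hbound
  filter_upwards [hbound.eventually_lt_const hεy, eventually_ge_atTop 1] with t hlt ht
  refine lt_of_le_of_lt ?_ hlt
  refine (mul_le_mul_of_nonneg_left (hv.measureReal_return_inter_upper_tail_le hS hε.le hK hba ht)
    (by positivity)).trans_eq ?_
  rw [show t / 2 = 1 / 2 * t by ring]
  ring

end ClockTails

/-! ### The return probability of the layered walk -/

section ReturnProbability

variable {d : ℕ} {Ω : Type*} [MeasurableSpace Ω] {P : (Fin (d + 1) → ℤ) → Measure Ω}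
  {S : ℝ → Ω → (Fin (d + 1) → ℤ)} {v : (Fin d → ℤ) → ℝ} {m : ℝ}

lemma IsCTSRW.measureReal_layerPath_eq_zero (hS : IsCTSRW (d + 1) P S) {t : ℝ} (ht : 0 ≤ t) :
    (P 0).real {ω | layerPath S t ω = 0} = lineKernel t 0 ^ d := by
  rw [measureReal_def, hS.measure_layerPath_eq ht, heatKernelENN_self,
    ENNReal.toReal_ofReal (pow_nonneg (lineKernel_nonneg ht 0) d)]

lemma IsCTSRW.measurable_lineKernel_additiveFunctional (hS : IsCTSRW (d + 1) P S)
    (v : (Fin d → ℤ) → ℝ) (t : ℝ) :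
    Measurable fun ω => lineKernel (additiveFunctional S v t ω) 0 :=
  antitone_lineKernel_zero_displacement.measurable.comp (hS.measurable_additiveFunctional v t)

lemma IsCTSRW.integrable_lineKernel_additiveFunctional (hS : IsCTSRW (d + 1) P S)
    (hv : ∀ x, 0 ≤ v x) (t : ℝ) :
    Integrable (fun ω => lineKernel (additiveFunctional S v t ω) 0) (P 0) := by
  have := hS.prob 0
  refine Integrable.of_bound
    (hS.measurable_lineKernel_additiveFunctional v t).aestronglyMeasurable 1
    (ae_of_all _ fun ω => ?_)
  have hA := additiveFunctional_nonneg (S := S) hv t ω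
  rw [Real.norm_of_nonneg (lineKernel_nonneg hA 0)]
  exact lineKernel_le_one hA 0

lemma IsCTSRW.measureReal_layered_return_eq (hS : IsCTSRW (d + 1) P S) (hv : ∀ x, 0 ≤ v x)
    {t : ℝ} (ht : 0 ≤ t) :
    (P 0).real {ω | layerPath S t ω = 0 ∧ S (additiveFunctional S v t ω) ω 0 = 0} =
      ∫ ω in {ω | layerPath S t ω = 0}, lineKernel (additiveFunctional S v t ω) 0 ∂P 0 := by
  rw [measureReal_def, hS.measure_layered_return_eq hv ht, integral_eq_lintegral_of_nonneg_ae
    (ae_of_all _ fun ω => lineKernel_nonneg (additiveFunctional_nonneg hv t ω) 0)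
    (hS.measurable_lineKernel_additiveFunctional v t).aestronglyMeasurable]

lemma IsCTSRW.measureReal_layered_return_le (hS : IsCTSRW (d + 1) P S) (hv : ∀ x, 0 ≤ v x)
    {a t : ℝ} (ha : 0 ≤ a) (ht : 0 ≤ t) :
    (P 0).real {ω | layerPath S t ω = 0 ∧ S (additiveFunctional S v t ω) ω 0 = 0} ≤
      lineKernel (a * t) 0 * lineKernel t 0 ^ d +
        (P 0).real {ω | additiveFunctional S v t ω < a * t} := by
  have := hS.prob 0
  set E := {ω | additiveFunctional S v t ω < a * t}
  have hE : MeasurableSet E := measurableSet_lt (hS.measurable_additiveFunctional v t)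
    measurable_const
  have hk : 0 ≤ lineKernel (a * t) 0 := lineKernel_nonneg (mul_nonneg ha ht) 0
  have hpoint (ω : Ω) : lineKernel (additiveFunctional S v t ω) 0 ≤
      lineKernel (a * t) 0 + E.indicator 1 ω := by
    by_cases hω : ω ∈ E
    · rw [indicator_of_mem hω, Pi.one_apply]
      linarith [lineKernel_le_one (additiveFunctional_nonneg (S := S) hv t ω) 0]
    · rw [indicator_of_notMem hω, add_zero]
      exact antitone_lineKernel_zero_displacement (not_lt.mp hω)
  have hone : Integrable (E.indicator (1 : Ω → ℝ))
      ((P 0).restrict {ω | layerPath S t ω = 0}) := (integrable_const 1).indicator hE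
  rw [hS.measureReal_layered_return_eq hv ht, ← hS.measureReal_layerPath_eq_zero ht]
  calc ∫ ω in {ω | layerPath S t ω = 0}, lineKernel (additiveFunctional S v t ω) 0 ∂P 0
      ≤ ∫ ω in {ω | layerPath S t ω = 0}, (lineKernel (a * t) 0 + E.indicator 1 ω) ∂P 0 :=
        integral_mono (hS.integrable_lineKernel_additiveFunctional hv t).integrableOn
          ((integrable_const _).add hone) hpoint
    _ = lineKernel (a * t) 0 * (P 0).real {ω | layerPath S t ω = 0} +
          ((P 0).restrict {ω | layerPath S t ω = 0}).real E := by
        rw [integral_add (integrable_const _) hone, setIntegral_const, smul_eq_mul, mul_comm,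
          integral_indicator_one hE]
    _ ≤ lineKernel (a * t) 0 * (P 0).real {ω | layerPath S t ω = 0} + (P 0).real E :=
        add_le_add_right
          (ENNReal.toReal_mono (measure_ne_top _ _) (Measure.restrict_apply_le _ _)) _

lemma IsCTSRW.le_measureReal_layered_return (hS : IsCTSRW (d + 1) P S) (hv : ∀ x, 0 ≤ v x)
    {a t : ℝ} (ht : 0 ≤ t) :
    lineKernel (a * t) 0 * (lineKernel t 0 ^ d -
        (P 0).real {ω | layerPath S t ω = 0 ∧ a * t < additiveFunctional S v t ω}) ≤
      (P 0).real {ω | layerPath S t ω = 0 ∧ S (additiveFunctional S v t ω) ω 0 = 0} := by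
  have := hS.prob 0
  rw [hS.measureReal_layered_return_eq hv ht, ← hS.measureReal_layerPath_eq_zero ht]
  set D := {ω | layerPath S t ω = 0}
  set E := {ω | layerPath S t ω = 0 ∧ a * t < additiveFunctional S v t ω}
  have hD : MeasurableSet D := hS.measurable_layerPath t (measurableSet_singleton 0)
  have hE : MeasurableSet E :=
    hD.inter (measurableSet_lt measurable_const (hS.measurable_additiveFunctional v t))
  have hED : E ⊆ D := fun ω hω => hω.1
  have hint := (hS.integrable_lineKernel_additiveFunctional hv t).integrableOn (s := D)
  calc lineKernel (a * t) 0 * ((P 0).real D - (P 0).real E)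
      = ∫ _ in D \ E, lineKernel (a * t) 0 ∂P 0 := by
        rw [← measureReal_sdiff hED hE, mul_comm, setIntegral_const, smul_eq_mul]
    _ ≤ ∫ ω in D \ E, lineKernel (additiveFunctional S v t ω) 0 ∂P 0 := by
        refine setIntegral_mono_on (integrable_const _) (hint.mono_set sdiff_subset)
          (hD.diff hE) fun ω hω => ?_
        exact antitone_lineKernel_zero_displacement (not_lt.mp fun h => hω.2 ⟨hω.1, h⟩)
    _ ≤ ∫ ω in D, lineKernel (additiveFunctional S v t ω) 0 ∂P 0 :=
        setIntegral_mono_set hint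
          (ae_of_all _ fun ω => lineKernel_nonneg (additiveFunctional_nonneg hv t ω) 0)
          sdiff_subset.eventuallyLE

lemma IsTypicalEnvironment.tendsto_return (hv : IsTypicalEnvironment P S m v)
    (hS : IsCTSRW (d + 1) P S) (hm : 0 < m) :
    Tendsto (fun t : ℝ => √t ^ (d + 1) *
      (P 0).real {ω | layerPath S t ω = 0 ∧ S (additiveFunctional S v t ω) ω 0 = 0}) atTop
      (𝓝 ((4 * π) ^ (-(1 / 2) : ℝ) * (√m)⁻¹ * ((4 * π) ^ (-(1 / 2) : ℝ)) ^ d)) := by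
  set c : ℝ := (4 * π) ^ (-(1 / 2) : ℝ)
  have hcont : ContinuousAt (fun a : ℝ => c * (√a)⁻¹ * c ^ d) m :=
    (continuousAt_const.mul (Real.continuous_sqrt.continuousAt.inv₀
      (Real.sqrt_pos.mpr hm).ne')).mul continuousAt_const
  have hreturn : Tendsto (fun t : ℝ => (√t * lineKernel t 0) ^ d) atTop (𝓝 (c ^ d)) :=
    tendsto_sqrt_mul_lineKernel.pow d
  refine tendsto_order.mpr ⟨fun y hy => ?_, fun y hy => ?_⟩
  · obtain ⟨a, hya, hma : m < a⟩ :=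
      (((hcont.eventually_const_lt hy).filter_mono nhdsWithin_le_nhds).and
        (self_mem_nhdsWithin (s := Ioi m))).exists
    have hlim := (tendsto_sqrt_mul_lineKernel_const_mul (hm.trans hma)).mul
      (hreturn.sub (hv.tendsto_return_inter_upper_tail hS hma))
    rw [sub_zero] at hlim
    filter_upwards [hlim.eventually_const_lt hya, eventually_ge_atTop 0] with t hyt ht
    refine hyt.trans_le (le_trans (le_of_eq (by ring)) (mul_le_mul_of_nonneg_left
      (hS.le_measureReal_layered_return hv.nonneg (a := a) ht) (by positivity)))
  · obtain ⟨a, ⟨hay, ham : a < m⟩, ha⟩ :=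
      ((((hcont.eventually_lt_const hy).filter_mono nhdsWithin_le_nhds).and
        (self_mem_nhdsWithin (s := Iio m))).and
        ((lt_mem_nhds hm).filter_mono nhdsWithin_le_nhds)).exists
    have hlim := ((tendsto_sqrt_mul_lineKernel_const_mul ha).mul hreturn).add
      (hv.tendsto_lower_tail hS ham)
    rw [add_zero] at hlim
    filter_upwards [hlim.eventually_lt_const hay, eventually_ge_atTop 0] with t hty ht
    exact ((mul_le_mul_of_nonneg_left (hS.measureReal_layered_return_le hv.nonneg ha.le ht)
      (by positivity)).trans_eq (by ring)).trans_lt hty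

end ReturnProbability

lemma IsScenery.integral_pos {d : ℕ} {α : ℝ} {Ω : Type*} [MeasurableSpace Ω] {μ : Measure Ω}
    {z : (Fin d → ℤ) → Ω → ℝ} (hz : IsScenery d α μ z) (hα : 0 < α) (hint : Integrable (z 0) μ) :
    0 < ∫ ζ, z 0 ζ ∂μ := by
  rw [integral_pos_iff_support_of_nonneg (hz.nonneg 0) hint, pos_iff_ne_zero]
  intro hsupp
  have htail : ∀ᶠ r : ℝ in atTop, Real.log (μ {ω | r < z 0 ω}).toReal / Real.log r = 0 := by
    filter_upwards [eventually_gt_atTop 0] with r hr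
    have hnull : μ {ω | r < z 0 ω} = 0 := measure_mono_null (fun ω hω => (hr.trans hω).ne') hsupp
    rw [hnull, ENNReal.toReal_zero, Real.log_zero, zero_div]
  have hlim : -α = 0 := tendsto_nhds_unique (hz.tail.congr' htail) tendsto_const_nhds
  linarith

lemma setOf_layeredWalk_eq_zero {d : ℕ} {Ωz Ωw : Type*} (z : (Fin d → ℤ) → Ωz → ℝ)
    (S : ℝ → Ωw → (Fin (d + 1) → ℤ)) (t : ℝ) (ζ : Ωz) :
    {ω | layeredWalk d z S t ζ ω = 0} =
      {ω | layerPath S t ω = 0 ∧ S (additiveFunctional S (fun x => z x ζ) t ω) ω 0 = 0} := by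
  ext ω
  exact Prod.ext_iff.trans and_comm

lemma sqrt_pow_eq_rpow {t : ℝ} (ht : 0 ≤ t) (k : ℕ) : √t ^ k = t ^ ((k : ℝ) / 2) := by
  rw [Real.sqrt_eq_rpow, ← Real.rpow_mul_natCast ht, one_div_mul_eq_div]

theorem stmt6_general (d : ℕ) (hd : 1 ≤ d)
    {Ωz Ωw : Type*} [MeasurableSpace Ωz] [MeasurableSpace Ωw]
    (μ : Measure Ωz) [IsProbabilityMeasure μ] (z : (Fin d → ℤ) → Ωz → ℝ)
    (hz : ∀ x, Measurable (z x)) (hnonneg : ∀ x ζ, 0 ≤ z x ζ) (hindep : iIndepFun z μ)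
    (hident : ∀ x, IdentDistrib (z x) (z 0) μ μ) (hint : Integrable (z 0) μ)
    (hmean : 0 < ∫ ζ, z 0 ζ ∂μ)
    (P : (Fin (d + 1) → ℤ) → Measure Ωw) (S : ℝ → Ωw → (Fin (d + 1) → ℤ))
    (hS : IsCTSRW (d + 1) P S) :
    ∀ᵐ ζ ∂μ, Tendsto
      (fun t : ℝ =>
        ((P 0) {ω | layeredWalk d z S t ζ ω = 0}).toReal / t ^ (-((1 + d : ℝ) / 2)))
      atTop
      (𝓝 ((4 * π) ^ (-((d + 1 : ℝ) / 2)) * (∫ ζ', z 0 ζ' ∂μ) ^ (-(1 / 2) : ℝ))) := by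
  filter_upwards [hS.ae_isTypicalEnvironment hd hz hnonneg hindep hident hint] with ζ hζ
  set m := ∫ ζ', z 0 ζ' ∂μ
  have hconst : (4 * π) ^ (-(1 / 2) : ℝ) * (√m)⁻¹ * ((4 * π) ^ (-(1 / 2) : ℝ)) ^ d =
      (4 * π) ^ (-((d + 1 : ℝ) / 2)) * m ^ (-(1 / 2) : ℝ) := by
    rw [mul_right_comm, ← pow_succ', ← Real.rpow_mul_natCast (by positivity),
      Real.rpow_neg hmean.le, Real.sqrt_eq_rpow]
    congr 2
    push_cast
    ring
  rw [← hconst]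
  refine (hζ.tendsto_return hS hmean).congr' ?_
  filter_upwards [eventually_ge_atTop 0] with t ht
  rw [setOf_layeredWalk_eq_zero, ← measureReal_def, Real.rpow_neg ht, div_inv_eq_mul, mul_comm,
    sqrt_pow_eq_rpow ht, Nat.cast_succ, add_comm (d : ℝ) 1]

/-- Theorem (on-diagonal heat kernel, finite-mean case): if `𝔼[z(0)] < ∞` then ℙ-a.s.
`P₀^ω(X_t = 0) = ((4π)^{-(d+1)/2} 𝔼[z(0)]^{-1/2} + o(1)) t^{-(1+d)/2}` as `t → ∞`. -/
theorem stmt6 (d : ℕ) (hd : 1 ≤ d) (α : ℝ) (hα : 0 < α)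
    {Ωz Ωw : Type*} [MeasurableSpace Ωz] [MeasurableSpace Ωw]
    (μ : Measure Ωz) (z : (Fin d → ℤ) → Ωz → ℝ) (hz : IsScenery d α μ z)
    (hint : Integrable (z 0) μ)
    (P : (Fin (d + 1) → ℤ) → Measure Ωw) (S : ℝ → Ωw → (Fin (d + 1) → ℤ))
    (hS : IsCTSRW (d + 1) P S) :
    ∀ᵐ ζ ∂ μ, Tendsto
      (fun t : ℝ =>
        ((P 0) {ω | layeredWalk d z S t ζ ω = 0}).toReal / t ^ (-((1 + d : ℝ) / 2)))
      atTop
      (nhds ((4 * Real.pi) ^ (-((d + 1 : ℝ) / 2)) * (∫ ζ', z 0 ζ' ∂ μ) ^ (-(1 / 2) : ℝ))) := by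
  have := hz.prob
  exact stmt6_general d hd μ z hz.meas hz.nonneg hz.indep hz.ident hint (hz.integral_pos hα hint)
    P S hS
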